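/- Let N be an odd Niemeier lattice of minimum norm 2 whose two even neighbors have root sublattices isometric to D₁₆⊕E₈ and A₁₅⊕D₉ respectively. Then N does not contain a sublattice isometric to L⁺. -/

import Mathlib

open scoped BigOperators

namespace Niemeier

variable {V : Type*} [AddCommGroup V] [Module ℚ V]
variable {W : Type*} [AddCommGroup W] [Module ℚ W]

/-- The dual lattice of a `ℤ`-submodule `L` of a rational vector space `V` with respect to the
bilinear form `B`: all vectors pairing integrally with every element of `L`. -/
def dualLattice (B : V →ₗ[ℚ] V →ₗ[ℚ] ℚ) (L : Submodule ℤ V) : Submodule ℤ V where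
  carrier := {x | ∀ y ∈ L, ∃ n : ℤ, B x y = n}
  zero_mem' := by
    intro y hy
    exact ⟨0, by simp⟩
  add_mem' := by
    intro a b ha hb y hy
    obtain ⟨m, hm⟩ := ha y hy
    obtain ⟨k, hk⟩ := hb y hy
    exact ⟨m + k, by push_cast [map_add, LinearMap.add_apply, hm, hk]; rfl⟩
  smul_mem' := by
    intro c x hx y hy
    obtain ⟨m, hm⟩ := hx y hy
    refine ⟨c * m, ?_⟩
    have h1 : B (c • x) y = c • (B x y) := by
      rw [map_zsmul]; rfl
    rw [h1, hm, zsmul_eq_mul]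
    push_cast
    ring

/-- `B` is a symmetric positive-definite bilinear form. -/
def IsPosDefSymm (B : V →ₗ[ℚ] V →ₗ[ℚ] ℚ) : Prop :=
  (∀ x y, B x y = B y x) ∧ ∀ x : V, x ≠ 0 → 0 < B x x

/-- `L` is a (full-rank, integral) lattice in `V` with respect to `B`. -/
structure IsIntegralLattice (B : V →ₗ[ℚ] V →ₗ[ℚ] ℚ) (L : Submodule ℤ V) : Prop where
  fg : L.FG
  spans : Submodule.span ℚ (L : Set V) = ⊤
  integral : L ≤ dualLattice B L

/-- `L` is unimodular: it coincides with its dual lattice. -/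
def IsUnimodular (B : V →ₗ[ℚ] V →ₗ[ℚ] ℚ) (L : Submodule ℤ V) : Prop :=
  L = dualLattice B L

/-- `L` is an even lattice: all norms are even integers. -/
def IsEvenLat (B : V →ₗ[ℚ] V →ₗ[ℚ] ℚ) (L : Submodule ℤ V) : Prop :=
  ∀ v ∈ L, ∃ n : ℤ, B v v = 2 * n

/-- `L` is an odd lattice: some vector has odd (integer) norm. -/
def IsOddLat (B : V →ₗ[ℚ] V →ₗ[ℚ] ℚ) (L : Submodule ℤ V) : Prop :=
  ∃ v ∈ L, ∃ n : ℤ, B v v = 2 * n + 1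

/-- An odd Niemeier lattice: an odd positive-definite unimodular integral lattice of rank 24
(positive-definiteness of `B` is a separate hypothesis). -/
def IsOddNiemeier (B : V →ₗ[ℚ] V →ₗ[ℚ] ℚ) (N : Submodule ℤ V) : Prop :=
  IsIntegralLattice B N ∧ IsUnimodular B N ∧ IsOddLat B N ∧ Module.finrank ℚ V = 24

/-- `D` is a subgroup of index two in `L`. -/
def IndexTwo (D L : Submodule ℤ V) : Prop :=
  D ≤ L ∧ ∃ a ∈ L, a ∉ D ∧ ∀ x ∈ L, x ∈ D ∨ x - a ∈ D

/-- Two lattices are neighbors if their intersection has index two in each of them. -/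
def Neighbors (L M : Submodule ℤ V) : Prop :=
  IndexTwo (L ⊓ M) L ∧ IndexTwo (L ⊓ M) M

/-- `E` is an even neighbor of the odd Niemeier lattice `N`: an even unimodular integral
lattice (in the same ambient space) which is a neighbor of `N`. -/
def IsEvenNeighbor (B : V →ₗ[ℚ] V →ₗ[ℚ] ℚ) (N E : Submodule ℤ V) : Prop :=
  IsIntegralLattice B E ∧ IsUnimodular B E ∧ IsEvenLat B E ∧ Neighbors N E

/-- The minimum norm of `L` equals `m`. -/
def HasMinNorm (B : V →ₗ[ℚ] V →ₗ[ℚ] ℚ) (L : Submodule ℤ V) (m : ℚ) : Prop :=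
  (∃ v ∈ L, v ≠ 0 ∧ B v v = m) ∧ ∀ v ∈ L, v ≠ 0 → m ≤ B v v

/-- `N` contains a sublattice isometric to the rank-6 lattice `L⁺`, i.e. there are vectors
`h, a 0, …, a 4` in `N` realizing the Gram matrix of `L⁺`. -/
def ContainsLPlus (B : V →ₗ[ℚ] V →ₗ[ℚ] ℚ) (N : Submodule ℤ V) : Prop :=
  ∃ h ∈ N, ∃ a : Fin 5 → V, (∀ i, a i ∈ N) ∧
    B h h = 2 ∧ (∀ i, B h (a i) = 1) ∧ (∀ i, B (a i) (a i) = 3) ∧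
    ∀ i j, i ≠ j → B (a i) (a j) = 0

/-- Two lattices (in possibly different ambient spaces, with forms `B` and `C`) are isometric:
there is a `ℤ`-linear bijection between them preserving the bilinear forms. -/
def LatticeIsometric (B : V → V → ℚ) (C : W → W → ℚ)
    (L : Submodule ℤ V) (M : Submodule ℤ W) : Prop :=
  ∃ f : L ≃ₗ[ℤ] M, ∀ x y : L, C (f x) (f y) = B x y

/-- The standard dot product on `ℚⁿ`. -/
def stdDot (n : ℕ) : (Fin n → ℚ) → (Fin n → ℚ) → ℚ := fun x y => ∑ i, x i * y i

/-- The orthogonal sum of two bilinear forms. -/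
def prodForm (B : V → V → ℚ) (C : W → W → ℚ) : V × W → V × W → ℚ :=
  fun p q => B p.1 q.1 + C p.2 q.2

/-- A vector in `ℚⁿ` has integer coordinates. -/
def IsIntVec {n : ℕ} (x : Fin n → ℚ) : Prop := ∀ i, ∃ m : ℤ, x i = m

/-- The root lattice `Dₙ = {x ∈ ℤⁿ : ∑ xᵢ even}`. -/
def latD (n : ℕ) : Submodule ℤ (Fin n → ℚ) where
  carrier := {x | IsIntVec x ∧ ∃ k : ℤ, ∑ i, x i = 2 * k}
  zero_mem' := by
    refine ⟨fun i => ⟨0, by simp⟩, 0, by simp⟩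
  add_mem' := by
    rintro a b ⟨ha, k₁, hk₁⟩ ⟨hb, k₂, hk₂⟩
    refine ⟨fun i => ?_, k₁ + k₂, ?_⟩
    · obtain ⟨m, hm⟩ := ha i
      obtain ⟨m', hm'⟩ := hb i
      exact ⟨m + m', by simp [Pi.add_apply, hm, hm']⟩
    · simp only [Pi.add_apply, Finset.sum_add_distrib, hk₁, hk₂]
      push_cast
      ring
  smul_mem' := by
    rintro c x ⟨hx, k, hk⟩
    refine ⟨fun i => ?_, c * k, ?_⟩
    · obtain ⟨m, hm⟩ := hx i
      exact ⟨c * m, by simp [Pi.smul_apply, hm, zsmul_eq_mul]⟩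
    · have : ∑ i, (c • x) i = c • ∑ i, x i := by
        simp [Pi.smul_apply, Finset.smul_sum]
      rw [this, hk, zsmul_eq_mul]
      push_cast
      ring

/-- The root lattice `Aₙ = {x ∈ ℤⁿ⁺¹ : ∑ xᵢ = 0}`. -/
def latA (n : ℕ) : Submodule ℤ (Fin (n + 1) → ℚ) where
  carrier := {x | IsIntVec x ∧ ∑ i, x i = 0}
  zero_mem' := ⟨fun i => ⟨0, by simp⟩, by simp⟩
  add_mem' := by
    rintro a b ⟨ha, hka⟩ ⟨hb, hkb⟩
    refine ⟨fun i => ?_, ?_⟩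
    · obtain ⟨m, hm⟩ := ha i
      obtain ⟨m', hm'⟩ := hb i
      exact ⟨m + m', by simp [Pi.add_apply, hm, hm']⟩
    · simp [Pi.add_apply, Finset.sum_add_distrib, hka, hkb]
  smul_mem' := by
    rintro c x ⟨hx, hk⟩
    refine ⟨fun i => ?_, ?_⟩
    · obtain ⟨m, hm⟩ := hx i
      exact ⟨c * m, by simp [Pi.smul_apply, hm, zsmul_eq_mul]⟩
    · have : ∑ i, (c • x) i = c • ∑ i, x i := by
        simp [Pi.smul_apply, Finset.smul_sum]
      rw [this, hk, smul_zero]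

/-- The root lattice `E₈ = D₈ + ℤ·(½,…,½)`. -/
def latE8 : Submodule ℤ (Fin 8 → ℚ) :=
  latD 8 ⊔ Submodule.span ℤ {fun _ => (1 : ℚ) / 2}

/-- The root sublattice of `E`: the `ℤ`-span of its vectors of norm 2. -/
def rootSublattice (B : V →ₗ[ℚ] V →ₗ[ℚ] ℚ) (E : Submodule ℤ V) : Submodule ℤ V :=
  Submodule.span ℤ {v : V | v ∈ E ∧ B v v = 2}

/-- The set of even-norm vectors of `N` (the even sublattice, as a set). -/
def evenSet (B : V →ₗ[ℚ] V →ₗ[ℚ] ℚ) (N : Submodule ℤ V) : Set V :=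
  {x | x ∈ N ∧ ∃ n : ℤ, B x x = 2 * n}

/-- The unordered pair of root sublattices of `E₁` and `E₂` is isometric to the pair
`(M₁, M₂)`. -/
def RootPairIso {W₁ W₂ : Type*} [AddCommGroup W₁] [Module ℚ W₁]
    [AddCommGroup W₂] [Module ℚ W₂]
    (B : V →ₗ[ℚ] V →ₗ[ℚ] ℚ) (E₁ E₂ : Submodule ℤ V)
    (C₁ : W₁ → W₁ → ℚ) (M₁ : Submodule ℤ W₁)
    (C₂ : W₂ → W₂ → ℚ) (M₂ : Submodule ℤ W₂) : Prop :=
  (LatticeIsometric (fun x y => B x y) C₁ (rootSublattice B E₁) M₁ ∧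
    LatticeIsometric (fun x y => B x y) C₂ (rootSublattice B E₂) M₂) ∨
  (LatticeIsometric (fun x y => B x y) C₂ (rootSublattice B E₁) M₂ ∧
    LatticeIsometric (fun x y => B x y) C₁ (rootSublattice B E₂) M₁)

/-- The unordered pair of root sublattices of `E₁`, `E₂` is one of the four exceptional pairs
`{E₈³, D₈³}`, `{D₁₆⊕E₈, A₁₅⊕D₉}`, `{D₁₂², A₁₂²}`, `{D₂₄, A₂₄}`. -/
def IsExceptionalPair (B : V →ₗ[ℚ] V →ₗ[ℚ] ℚ) (E₁ E₂ : Submodule ℤ V) : Prop :=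
  RootPairIso B E₁ E₂
    (prodForm (stdDot 8) (prodForm (stdDot 8) (stdDot 8))) (latE8.prod (latE8.prod latE8))
    (prodForm (stdDot 8) (prodForm (stdDot 8) (stdDot 8))) ((latD 8).prod ((latD 8).prod (latD 8))) ∨
  RootPairIso B E₁ E₂
    (prodForm (stdDot 16) (stdDot 8)) ((latD 16).prod latE8)
    (prodForm (stdDot 16) (stdDot 9)) ((latA 15).prod (latD 9)) ∨
  RootPairIso B E₁ E₂
    (prodForm (stdDot 12) (stdDot 12)) ((latD 12).prod (latD 12))
    (prodForm (stdDot 13) (stdDot 13)) ((latA 12).prod (latA 12)) ∨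
  RootPairIso B E₁ E₂
    (stdDot 24) (latD 24)
    (stdDot 25) (latA 24)

/-! ### Coordinate-level combinatorics -/

theorem pigeon5 (c : Fin 5 → Prop) : ∃ i j k : Fin 5, i ≠ j ∧ i ≠ k ∧ j ≠ k ∧
    ((c i ∧ c j ∧ c k) ∨ (¬ c i ∧ ¬ c j ∧ ¬ c k)) := by
  classical
  have key : ∀ b : Fin 5 → Bool, ∃ i j k : Fin 5, i ≠ j ∧ i ≠ k ∧ j ≠ k ∧
    ((b i = true ∧ b j = true ∧ b k = true) ∨ (¬ b i = true ∧ ¬ b j = true ∧ ¬ b k = true)) := by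
    decide
  simpa using key (fun i => decide (c i))

/-- All coordinates are integers, or all coordinates are proper half-integers. -/
def IntOrHalf {n : ℕ} (x : Fin n → ℚ) : Prop :=
  (∀ i, ∃ m : ℤ, x i = m) ∨ (∀ i, ∃ m : ℤ, x i = m + 1 / 2)

/-- All coordinates are odd multiples of `1/4`. -/
def Quarter {n : ℕ} (x : Fin n → ℚ) : Prop :=
  ∀ i, ∃ m : ℤ, x i = (2 * m + 1) / 4

theorem dot_nonneg {n : ℕ} (x : Fin n → ℚ) : 0 ≤ x ⬝ᵥ x :=
  Finset.sum_nonneg fun i _ => mul_self_nonneg (x i)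

theorem eq_zero_of_dot {n : ℕ} {x : Fin n → ℚ} (h : x ⬝ᵥ x = 0) : x = 0 :=
  dotProduct_self_eq_zero.mp h

theorem coord_sq_le {n : ℕ} (x : Fin n → ℚ) (i : Fin n) : x i * x i ≤ x ⬝ᵥ x :=
  Finset.single_le_sum (f := fun i => x i * x i) (fun i _ => mul_self_nonneg (x i))
    (Finset.mem_univ i)

theorem half_norm {x : Fin 16 → ℚ} (h : ∀ i, ∃ m : ℤ, x i = m + 1 / 2) : 4 ≤ x ⬝ᵥ x := by
  have h1 : ∑ i : Fin 16, (1 / 4 : ℚ) ≤ ∑ i, x i * x i := by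
    refine Finset.sum_le_sum fun i _ => ?_
    obtain ⟨m, hm⟩ := h i
    rw [hm]
    have : (0 : ℤ) ≤ m * (m + 1) := by
      rcases le_or_gt 0 m with h | h
      · positivity
      · nlinarith
    have : (0 : ℚ) ≤ m * (m + 1) := by exact_mod_cast this
    nlinarith
  simp at h1
  have : x ⬝ᵥ x = ∑ i, x i * x i := rfl
  rw [this]; linarith

theorem quarter_sq {x : Fin 16 → ℚ} (h : Quarter x) (i : Fin 16) : 1 / 16 ≤ x i * x i := by
  obtain ⟨m, hm⟩ := h i
  rw [hm]
  have : (0 : ℤ) ≤ m * (m + 1) := by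
    rcases le_or_gt 0 m with h | h
    · positivity
    · nlinarith
  have : (0 : ℚ) ≤ m * (m + 1) := by exact_mod_cast this
  nlinarith

theorem quarter_excess {x : Fin 16 → ℚ} :
    ∑ i, (x i * x i - 1 / 16) = x ⬝ᵥ x - 1 := by
  rw [Finset.sum_sub_distrib]
  have : x ⬝ᵥ x = ∑ i, x i * x i := rfl
  rw [this]; simp

theorem quarter_norm_ge {x : Fin 16 → ℚ} (h : Quarter x) : 1 ≤ x ⬝ᵥ x := by
  have := quarter_excess (x := x)
  have h2 : 0 ≤ ∑ i, (x i * x i - 1 / 16) :=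
    Finset.sum_nonneg fun i _ => by linarith [quarter_sq h i]
  linarith

theorem quarter_le {x : Fin 16 → ℚ} (h : Quarter x) (i : Fin 16) :
    x i * x i - 1 / 16 ≤ x ⬝ᵥ x - 1 := by
  rw [← quarter_excess]
  exact Finset.single_le_sum (f := fun i => x i * x i - 1 / 16)
    (fun i _ => by linarith [quarter_sq h i]) (Finset.mem_univ i)

/-- Entries of a quarter vector of norm 1. -/
theorem quarter_one {x : Fin 16 → ℚ} (h : Quarter x) (hn : x ⬝ᵥ x = 1) (i : Fin 16) :
    x i = 1 / 4 ∨ x i = - 1 / 4 := by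
  have := quarter_le h i
  rw [hn] at this
  have h2 := quarter_sq h i
  have h3 : (x i - 1 / 4) * (x i + 1 / 4) = 0 := by nlinarith
  rcases mul_eq_zero.mp h3 with h | h
  · left; linarith
  · right; linarith

/-- Entries of a quarter vector of norm 2. -/
theorem quarter_two {x : Fin 16 → ℚ} (h : Quarter x) (hn : x ⬝ᵥ x = 2) (i : Fin 16) :
    x i = 1 / 4 ∨ x i = - 1 / 4 ∨ x i = 3 / 4 ∨ x i = - 3 / 4 := by
  have := quarter_le h i
  rw [hn] at this
  obtain ⟨m, hm⟩ := h i
  rw [hm] at this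
  have h1 : (2 * m + 1) * (2 * m + 1) ≤ 17 := by
    have : ((2 * m + 1) * (2 * m + 1) : ℚ) ≤ 17 := by linarith
    exact_mod_cast this
  have h2 : m ≤ 1 := by nlinarith
  have h3 : -2 ≤ m := by nlinarith
  rw [hm]
  interval_cases m <;> norm_num

theorem int_sub_ne {m : ℤ} {q : ℚ} (k : ℤ) (h : q = m) (h1 : (k : ℚ) < q) (h2 : q < k + 1) : False := by
  rw [h] at h1 h2
  have a : k < m := by exact_mod_cast h1
  have b : m < k + 1 := by exact_mod_cast h2
  omega

/-- Case `D₁₆`: two norm-2 quarter vectors agreeing in the two positions of the root, with one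
of these entries of size `3/4`, have inner product at least one. -/
theorem caseD_ge {p p' : Fin 16 → ℚ} (hp : Quarter p) (hp' : Quarter p')
    (hn : p ⬝ᵥ p = 2) (hn' : p' ⬝ᵥ p' = 2) (hd : IntOrHalf (p - p')) {s t : Fin 16} (hst : s ≠ t)
    (hs : p s = p' s) (ht : p t = p' t) (hsum : p s * p s + p t * p t = 10 / 16) :
    1 ≤ p ⬝ᵥ p' := by
  have hdiff : ∀ i, ∃ m : ℤ, p i - p' i = m := by
    rcases hd with h | h
    · exact h
    · obtain ⟨m, hm⟩ := h s
      simp only [Pi.sub_apply, hs, sub_self] at hm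
      have : (2 * m + 1 : ℚ) = 0 := by linarith
      have : (2 * m + 1 : ℤ) = 0 := by exact_mod_cast this
      omega
  let F : Fin 16 → ℚ := fun k => 2 * (p k * p k - 1 / 16) + 2 * (p' k * p' k - 1 / 16)
    - (p k - p' k) * (p k - p' k)
  have hF : ∀ k, 0 ≤ F k := by
    intro k
    obtain ⟨m, hm⟩ := hdiff k
    rcases quarter_two hp hn k with h | h | h | h <;>
    rcases quarter_two hp' hn' k with h' | h' | h' | h' <;>
    simp only [F, h, h'] <;> norm_num <;> rw [h, h'] at hm <;> norm_num at hm <;> exfalso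
    all_goals
      first | (refine int_sub_ne 0 hm ?_ ?_ <;> norm_num; done) | (refine int_sub_ne (-1) hm ?_ ?_ <;> norm_num; done) | (refine int_sub_ne 1 hm ?_ ?_ <;> norm_num; done) | (refine int_sub_ne (-2) hm ?_ ?_ <;> norm_num; done)
  have h1 : F s + F t ≤ ∑ k, F k := by
    rw [← Finset.sum_pair hst]
    exact Finset.sum_le_sum_of_subset_of_nonneg (Finset.subset_univ _) fun k _ _ => hF k
  have h2 : ∑ k, F k = 2 * (p ⬝ᵥ p - 1) + 2 * (p' ⬝ᵥ p' - 1) - (p - p') ⬝ᵥ (p - p') := by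
    rw [← quarter_excess, ← quarter_excess, Finset.mul_sum, Finset.mul_sum,
      ← Finset.sum_add_distrib]
    simp only [dotProduct, Pi.sub_apply]
    rw [← Finset.sum_sub_distrib]
  have h3 : (p - p') ⬝ᵥ (p - p') = 4 - 2 * (p ⬝ᵥ p') := by
    rw [sub_dotProduct, dotProduct_sub, dotProduct_sub, hn, hn', dotProduct_comm p' p]; ring
  have h4 : F s + F t = 2 := by
    simp only [F]
    rw [← hs, ← ht]; linarith
  rw [h2, h3, h4, hn, hn'] at h1
  linarith

theorem coreB (p : Fin 5 → Fin 16 → ℚ) (q : Fin 5 → Fin 8 → ℚ)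
    (h₁ : Fin 16 → ℚ) (h₂ : Fin 8 → ℚ)
    (hp : ∀ i, Quarter (p i))
    (hty : ∀ i, (p i ⬝ᵥ p i = 1 ∧ q i ⬝ᵥ q i = 2) ∨ (p i ⬝ᵥ p i = 2 ∧ q i ⬝ᵥ q i = 1))
    (hsub : ∀ i j, IntOrHalf (p i - p j)) (hadd : ∀ i j, IntOrHalf (p i + p j))
    (hq : ∀ i j, ∃ m : ℤ, (q i - q j) ⬝ᵥ (q i - q j) = 2 * m)
    (horth : ∀ i j, i ≠ j → p i ⬝ᵥ p j + q i ⬝ᵥ q j = 0)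
    (hh : ∀ i, h₁ ⬝ᵥ p i + h₂ ⬝ᵥ q i = 1)
    (hroot : ((∃ s t : Fin 16, s ≠ t ∧ (h₁ s = 1 ∨ h₁ s = -1) ∧ (h₁ t = 1 ∨ h₁ t = -1) ∧
        ∀ k, k ≠ s → k ≠ t → h₁ k = 0) ∧ h₂ = 0) ∨ (h₁ = 0 ∧ h₂ ⬝ᵥ h₂ = 2)) : False := by
  -- expansion of norms
  have nsub : ∀ {n : ℕ} (x y : Fin n → ℚ), (x - y) ⬝ᵥ (x - y) = x ⬝ᵥ x + y ⬝ᵥ y - 2 * (x ⬝ᵥ y) := by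
    intro n x y
    rw [sub_dotProduct, dotProduct_sub, dotProduct_sub, dotProduct_comm y x]; ring
  have nadd : ∀ {n : ℕ} (x y : Fin n → ℚ), (x + y) ⬝ᵥ (x + y) = x ⬝ᵥ x + y ⬝ᵥ y + 2 * (x ⬝ᵥ y) := by
    intro n x y
    rw [add_dotProduct, dotProduct_add, dotProduct_add, dotProduct_comm y x]; ring
  -- inner products of norm-one `q`
  have q11 : ∀ i j, q i ⬝ᵥ q i = 1 → q j ⬝ᵥ q j = 1 →
      q i ⬝ᵥ q j = 1 ∨ q i ⬝ᵥ q j = 0 ∨ q i ⬝ᵥ q j = -1 := by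
    intro i j hi hj
    obtain ⟨m, hm⟩ := hq i j
    rw [nsub, hi, hj] at hm
    have e : q i ⬝ᵥ q j = 1 - m := by linarith
    have a := dot_nonneg (q i - q j)
    have b := dot_nonneg (q i + q j)
    rw [nsub, hi, hj, e] at a
    rw [nadd, hi, hj, e] at b
    have a' : (0 : ℤ) ≤ m := by
      have : (0 : ℚ) ≤ m := by linarith
      exact_mod_cast this
    have b' : m ≤ 2 := by
      have : (m : ℚ) ≤ 2 := by linarith
      exact_mod_cast this
    rw [e]
    interval_cases m <;> norm_num
  rcases hroot with ⟨⟨s, t, hst, hs, ht, hk⟩, h20⟩ | ⟨h10, h22⟩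
  · -- the root lies in `D₁₆`
    have hpair : ∀ i, h₁ s * p i s + h₁ t * p i t = 1 := by
      intro i
      have := hh i
      rw [h20, zero_dotProduct, add_zero] at this
      rw [← this, ← Finset.sum_pair (f := fun k => h₁ k * p i k) hst]
      refine Finset.sum_subset (Finset.subset_univ _) fun k _ hk' => ?_
      simp only [Finset.mem_insert, Finset.mem_singleton, not_or] at hk'
      rw [hk k hk'.1 hk'.2, zero_mul]
    have hII : ∀ i, p i ⬝ᵥ p i = 2 ∧ q i ⬝ᵥ q i = 1 := by
      intro i
      rcases hty i with h | h
      · exfalso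
        have := hpair i
        rcases quarter_one (hp i) h.1 s with a | a <;> rcases quarter_one (hp i) h.1 t with b | b <;>
          rcases hs with c | c <;> rcases ht with d | d <;> rw [a, b, c, d] at this <;> norm_num at this
      · exact h
    have hcl : ∀ i, (p i s = h₁ s * (3 / 4) ∧ p i t = h₁ t * (1 / 4)) ∨
        (p i s = h₁ s * (1 / 4) ∧ p i t = h₁ t * (3 / 4)) := by
      intro i
      have := hpair i
      rcases quarter_two (hp i) (hII i).1 s with a | a | a | a <;>
        rcases quarter_two (hp i) (hII i).1 t with b | b | b | b <;>
        rcases hs with c | c <;> rcases ht with d | d <;> rw [a, b, c, d] at this ⊢ <;>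
        first | (exfalso; norm_num at this; done) | norm_num
    have hs2 : h₁ s * h₁ s = 1 := by rcases hs with h | h <;> rw [h] <;> norm_num
    have ht2 : h₁ t * h₁ t = 1 := by rcases ht with h | h <;> rw [h] <;> norm_num
    have hneg : ∀ i j, i ≠ j → p i s = p j s → p i t = p j t → q j = - q i := by
      intro i j hij h1 h2
      have h3 := caseD_ge (hp i) (hp j) (hII i).1 (hII j).1 (hsub i j) hst h1 h2 (by
        rcases hcl i with h | h <;> rw [h.1, h.2] <;> nlinarith)
      have h4 := horth i j hij
      have h5 := q11 i j (hII i).2 (hII j).2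
      have h6 : q i ⬝ᵥ q j = -1 := by
        rcases h5 with h | h | h
        · linarith
        · linarith
        · exact h
      have h7 : (q j + q i) = 0 := eq_zero_of_dot (by
        rw [nadd, (hII i).2, (hII j).2, dotProduct_comm, h6]; norm_num)
      exact eq_neg_of_add_eq_zero_left h7
    obtain ⟨i, j, k, hij, hik, hjk, hc⟩ := pigeon5 (fun i => p i s = h₁ s * (3 / 4) ∧ p i t = h₁ t * (1 / 4))
    have hsame : (p i s = p j s ∧ p i t = p j t) ∧ (p i s = p k s ∧ p i t = p k t) := by
      rcases hc with ⟨a, b, c⟩ | ⟨a, b, c⟩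
      · rw [a.1, a.2, b.1, b.2, c.1, c.2]; simp
      · have a := (hcl i).resolve_left a
        have b := (hcl j).resolve_left b
        have c := (hcl k).resolve_left c
        rw [a.1, a.2, b.1, b.2, c.1, c.2]; simp
    have e1 := hneg i j hij hsame.1.1 hsame.1.2
    have e2 := hneg i k hik hsame.2.1 hsame.2.2
    have e3 := hneg j k hjk (hsame.1.1.symm.trans hsame.2.1) (hsame.1.2.symm.trans hsame.2.2)
    rw [e1, neg_neg] at e3
    have e4 : q i ⬝ᵥ q i = - (q i ⬝ᵥ q i) := by
      rw [← neg_dotProduct, ← e2, e3]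
    have := (hII i).2
    linarith
  · -- the root lies in `E₈`
    have hhq : ∀ i, h₂ ⬝ᵥ q i = 1 := by
      intro i
      have := hh i
      rwa [h10, zero_dotProduct, zero_add] at this
    have Ea : ∀ i j, p i ⬝ᵥ p i = 1 → p j ⬝ᵥ p j = 1 → p j = p i ∨ p j = - p i := by
      intro i j hi hj
      rcases hsub i j with h | h
      · left; funext k
        obtain ⟨m, hm⟩ := h k
        rw [Pi.sub_apply] at hm
        rcases quarter_one (hp i) hi k with a | a <;> rcases quarter_one (hp j) hj k with b | b <;>
          rw [a, b] at hm ⊢ <;> norm_num at hm <;> exfalso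
        · exact int_sub_ne 0 hm (by norm_num) (by norm_num)
        · exact int_sub_ne (-1) hm (by norm_num) (by norm_num)
      · right; funext k
        obtain ⟨m, hm⟩ := h k
        have hm' : p i k - p j k - 1 / 2 = m := by rw [Pi.sub_apply] at hm; linarith
        rw [Pi.neg_apply]
        rcases quarter_one (hp i) hi k with a | a <;> rcases quarter_one (hp j) hj k with b | b <;>
          rw [a, b] at hm' ⊢ <;> norm_num at hm' ⊢
        · exact int_sub_ne (-1) hm' (by norm_num) (by norm_num)
        · exact int_sub_ne (-1) hm' (by norm_num) (by norm_num)
    have sumh : ∀ i j, q i ⬝ᵥ q i + q j ⬝ᵥ q j + 2 * (q i ⬝ᵥ q j) = 2 → q i + q j = h₂ := by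
      intro i j h
      have : (q i + q j - h₂) = 0 := eq_zero_of_dot (by
        rw [nsub, nadd, h, h22, dotProduct_comm, dotProduct_add, hhq, hhq]; norm_num)
      exact sub_eq_zero.mp this
    have Eb : ∀ i j k, i ≠ j → i ≠ k → j ≠ k → p i ⬝ᵥ p i = 1 → p j = p i → p k = p i → False := by
      intro i j k hij hik hjk hi hj hk
      have ti : ∀ l, p l ⬝ᵥ p l = 1 → q l ⬝ᵥ q l = 2 := by
        intro l hl
        rcases hty l with h | h
        · exact h.2
        · linarith [h.1]
      have qi := ti i hi
      have qj := ti j (by rw [hj, hi])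
      have qk := ti k (by rw [hk, hi])
      have o1 := horth i j hij
      have o2 := horth i k hik
      have o3 := horth j k hjk
      rw [hj, hi] at o1
      rw [hk, hi] at o2
      rw [hk, hj, hi] at o3
      have s1 := sumh i j (by linarith)
      have s2 := sumh i k (by linarith)
      have : q j = q k := add_left_cancel (s1.trans s2.symm)
      rw [this, qk] at o3
      norm_num at o3
    have Ec : ∀ i j, q i ⬝ᵥ q i = 1 → q j ⬝ᵥ q j = 1 → q j = q i ∨ q j = h₂ - q i := by
      intro i j hi hj
      rcases q11 i j hi hj with h | h | h
      · left
        have : q j - q i = 0 := eq_zero_of_dot (by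
          rw [nsub, hi, hj, dotProduct_comm, h]; norm_num)
        exact sub_eq_zero.mp this
      · right
        rw [← sumh i j (by rw [hi, hj, h]; norm_num)]; simp
      · exfalso
        have : q i + q j = 0 := eq_zero_of_dot (by
          rw [nadd, hi, hj, h]; norm_num)
        have h2 : h₂ ⬝ᵥ (q i + q j) = 2 := by rw [dotProduct_add, hhq, hhq]; norm_num
        rw [this, dotProduct_zero] at h2
        norm_num at h2
    have Ed : ∀ i j k, i ≠ j → i ≠ k → j ≠ k → q i ⬝ᵥ q i = 1 → q j = q i → q k = q i → False := by
      intro i j k hij hik hjk hi hj hk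
      have ti : ∀ l, q l ⬝ᵥ q l = 1 → p l ⬝ᵥ p l = 2 := by
        intro l hl
        rcases hty l with h | h
        · linarith [h.2]
        · exact h.1
      have pi' := ti i hi
      have pj := ti j (by rw [hj, hi])
      have pk := ti k (by rw [hk, hi])
      have o1 := horth i j hij
      have o2 := horth i k hik
      have o3 := horth j k hjk
      rw [hj, hi] at o1
      rw [hk, hi] at o2
      rw [hk, hj, hi] at o3
      have z : p i + p j + p k = 0 := eq_zero_of_dot (by
        rw [nadd, nadd, add_dotProduct]; linarith)
      have z0 := congrFun z 0
      obtain ⟨a, ha⟩ := hp i 0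
      obtain ⟨b, hb⟩ := hp j 0
      obtain ⟨c, hc⟩ := hp k 0
      simp only [Pi.add_apply, Pi.zero_apply, ha, hb, hc] at z0
      have : ((2 * a + 1) + (2 * b + 1) + (2 * c + 1) : ℚ) = 0 := by linarith
      have : ((2 * a + 1) + (2 * b + 1) + (2 * c + 1) : ℤ) = 0 := by exact_mod_cast this
      omega
    have cs : ∀ x y : Fin 8 → ℚ, x ⬝ᵥ x = 2 → y ⬝ᵥ y = 1 → (x ⬝ᵥ y) * (x ⬝ᵥ y) ≤ 2 := by
      intro x y hx hy
      have := dot_nonneg (x - (x ⬝ᵥ y) • y)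
      rw [nsub, hx, smul_dotProduct, dotProduct_smul, dotProduct_smul, hy] at this
      simp only [smul_eq_mul] at this
      linarith
    have Ee : ∀ i j, p i ⬝ᵥ p i = 1 → q i ⬝ᵥ q i = 2 → p j ⬝ᵥ p j = 2 → q j ⬝ᵥ q j = 1 →
        p i ⬝ᵥ p j = - 1 / 2 := by
      intro i j hi hi' hj hj'
      have hij : i ≠ j := by rintro rfl; linarith
      obtain ⟨m, hm⟩ := hq i j
      rw [nsub, hi', hj'] at hm
      have e : q i ⬝ᵥ q j = 3 / 2 - m := by linarith
      have c1 := cs (q i) (q j) hi' hj'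
      have c2 := cs (q i) (h₂ - q j) hi' (by rw [nsub, h22, hj', hhq]; norm_num)
      rw [dotProduct_sub, dotProduct_comm (q i) h₂, hhq, e] at c2
      rw [e] at c1
      have m1 : (m : ℚ) = 1 := by
        have a : m < 3 := by
          by_contra hcon
          have : (3 : ℚ) ≤ m := by exact_mod_cast not_lt.mp hcon
          nlinarith
        have b : 0 < m := by
          by_contra hcon
          have : (m : ℚ) ≤ 0 := by exact_mod_cast not_lt.mp hcon
          nlinarith
        have c : m ≠ 2 := by
          rintro rfl
          norm_num at c2
        have : m = 1 := by omega
        rw [this]; norm_num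
      have := horth i j hij
      rw [e, m1] at this
      linarith
    have Ef : ∀ i j k, j ≠ k → p i ⬝ᵥ p i = 1 → q i ⬝ᵥ q i = 2 → p j ⬝ᵥ p j = 2 → q j ⬝ᵥ q j = 1 →
        p k ⬝ᵥ p k = 2 → q k = q j → False := by
      intro i j k hjk hi hi' hj hj' hk hkj
      have hk' : q k ⬝ᵥ q k = 1 := by rw [hkj, hj']
      have e1 := Ee i j hi hi' hj hj'
      have e2 := Ee i k hi hi' hk hk'
      have e3 := horth j k hjk
      rw [hkj, hj'] at e3
      have rint : ∀ l, p l ⬝ᵥ p l = 2 → p i ⬝ᵥ p l = -1 / 2 → ∀ x, 0 ≤ (p i + p l) x * p i x := by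
        intro l hl hil x
        have hn : (p i + p l) ⬝ᵥ (p i + p l) = 2 := by rw [nadd, hi, hl, hil]; norm_num
        rcases hadd i l with h | h
        · obtain ⟨m, hm⟩ := h x
          rw [Pi.add_apply] at hm ⊢
          rcases quarter_one (hp i) hi x with a | a <;>
            rcases quarter_two (hp l) hl x with b | b | b | b <;>
            rw [a, b] at hm ⊢ <;> norm_num at hm ⊢
          all_goals
            first | (refine int_sub_ne 0 hm ?_ ?_ <;> norm_num; done) | (refine int_sub_ne (-1) hm ?_ ?_ <;> norm_num; done) | (refine int_sub_ne 1 hm ?_ ?_ <;> norm_num; done) | (refine int_sub_ne (-2) hm ?_ ?_ <;> norm_num; done)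
        · have := half_norm h
          linarith
      have r1 := rint j hj e1
      have r2 := rint k hk e2
      have h0 : 0 ≤ (p i + p j) ⬝ᵥ (p i + p k) := by
        refine Finset.sum_nonneg fun x _ => ?_
        have a := r1 x
        have b := r2 x
        rcases quarter_one (hp i) hi x with c | c <;> rw [c] at a b
        · exact mul_nonneg (by linarith) (by linarith)
        · exact mul_nonneg_of_nonpos_of_nonpos (by linarith) (by linarith)
      rw [add_dotProduct, dotProduct_add, dotProduct_add, hi, e2, dotProduct_comm (p j), e1] at h0
      linarith
    obtain ⟨i, j, k, hij, hik, hjk, hc⟩ := pigeon5 (fun i => p i ⬝ᵥ p i = 1)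
    rcases hc with ⟨hi, hj, hk⟩ | ⟨hi, hj, hk⟩
    · by_cases hex : ∃ l, ¬ p l ⬝ᵥ p l = 1
      · obtain ⟨l, hl⟩ := hex
        have hl' := (hty l).resolve_left (fun h => hl h.1)
        have qq : ∀ x, p x ⬝ᵥ p x = 1 → q x ⬝ᵥ q x = 2 := by
          intro x hx
          rcases hty x with h | h
          · exact h.2
          · linarith [h.1]
        have f := fun x (hx : p x ⬝ᵥ p x = 1) => Ee x l hx (qq x hx) hl'.1 hl'.2
        have fi := f i hi
        have same : ∀ x, p x ⬝ᵥ p x = 1 → p x = p i := by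
          intro x hx
          rcases Ea i x hi hx with h | h
          · exact h
          · have := f x hx
            rw [h, neg_dotProduct, fi] at this
            norm_num at this
        exact Eb i j k hij hik hjk hi (same j hj) (same k hk)
      · push Not at hex
        obtain ⟨i, j, k, hij, hik, hjk, hc⟩ := pigeon5 (fun i => p i = p 0)
        rcases hc with ⟨a, b, c⟩ | ⟨a, b, c⟩
        · exact Eb i j k hij hik hjk (hex i) (b.trans a.symm) (c.trans a.symm)
        · have a := (Ea 0 i (hex 0) (hex i)).resolve_left a
          have b := (Ea 0 j (hex 0) (hex j)).resolve_left b
          have c := (Ea 0 k (hex 0) (hex k)).resolve_left c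
          exact Eb i j k hij hik hjk (hex i) (b.trans a.symm) (c.trans a.symm)
    · have hi := (hty i).resolve_left (fun h => hi h.1)
      have hj := (hty j).resolve_left (fun h => hj h.1)
      have hk := (hty k).resolve_left (fun h => hk h.1)
      by_cases hex : ∃ l, p l ⬝ᵥ p l = 1
      · obtain ⟨l, hl⟩ := hex
        have hl' : q l ⬝ᵥ q l = 2 := by
          rcases hty l with h | h
          · exact h.2
          · linarith [h.1]
        rcases Ec i j hi.2 hj.2 with h | h
        · exact Ef l i j hij hl hl' hi.1 hi.2 hj.1 h
        · rcases Ec i k hi.2 hk.2 with h' | h'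
          · exact Ef l i k hik hl hl' hi.1 hi.2 hk.1 h'
          · exact Ef l j k hjk hl hl' hj.1 hj.2 hk.1 (h'.trans h.symm)
      · push Not at hex
        have all : ∀ x, q x ⬝ᵥ q x = 1 := fun x => ((hty x).resolve_left (fun h => hex x h.1)).2
        obtain ⟨i, j, k, hij, hik, hjk, hc⟩ := pigeon5 (fun i => q i = q 0)
        rcases hc with ⟨a, b, c⟩ | ⟨a, b, c⟩
        · exact Ed i j k hij hik hjk (all i) (b.trans a.symm) (c.trans a.symm)
        · have a := (Ec 0 i (all 0) (all i)).resolve_left a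
          have b := (Ec 0 j (all 0) (all j)).resolve_left b
          have c := (Ec 0 k (all 0) (all k)).resolve_left c
          exact Ed i j k hij hik hjk (all i) (b.trans a.symm) (c.trans a.symm)

/-! ### Integral vectors of norm two -/

theorem int_root_struct {κ : Type*} [Fintype κ] [DecidableEq κ] (c : κ → ℤ) (hc : c ⬝ᵥ c = 2) :
    ∃ s t, s ≠ t ∧ (c s = 1 ∨ c s = -1) ∧ (c t = 1 ∨ c t = -1) ∧ ∀ k, k ≠ s → k ≠ t → c k = 0 := by
  have unit : ∀ x : ℤ, x ≠ 0 → x * x ≤ 2 → x = 1 ∨ x = -1 := by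
    intro x hx h
    have h1 : x ≤ 1 := by nlinarith
    have h2 : -1 ≤ x := by nlinarith
    omega
  have hsum : ∑ k, c k * c k = 2 := hc
  have hle : ∀ k, c k * c k ≤ 2 := by
    intro k
    rw [← hsum]
    exact Finset.single_le_sum (f := fun i => c i * c i) (fun i _ => mul_self_nonneg (c i))
      (Finset.mem_univ k)
  obtain ⟨s, hs⟩ : ∃ s, c s ≠ 0 := by
    by_contra! h
    simp [h] at hsum
  have hs1 := unit _ hs (hle s)
  have hss : c s * c s = 1 := by rcases hs1 with h | h <;> rw [h] <;> norm_num
  rw [← Finset.add_sum_erase _ _ (Finset.mem_univ s), hss] at hsum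
  have hsum1 : ∑ k ∈ Finset.univ.erase s, c k * c k = 1 := by linarith
  obtain ⟨t, hts, ht⟩ : ∃ t, t ≠ s ∧ c t ≠ 0 := by
    by_contra! h
    rw [Finset.sum_eq_zero (fun k hk => by rw [h k (Finset.ne_of_mem_erase hk), zero_mul])] at hsum1
    norm_num at hsum1
  have ht1 := unit _ ht (hle t)
  have htt : c t * c t = 1 := by rcases ht1 with h | h <;> rw [h] <;> norm_num
  rw [← Finset.add_sum_erase _ _ (Finset.mem_erase.mpr ⟨hts, Finset.mem_univ t⟩), htt] at hsum1
  have hsum2 : ∑ k ∈ (Finset.univ.erase s).erase t, c k * c k = 0 := by linarith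
  rw [Finset.sum_eq_zero_iff_of_nonneg (fun i _ => mul_self_nonneg (c i))] at hsum2
  refine ⟨s, t, hts.symm, hs1, ht1, fun k h1 h2 => ?_⟩
  have := hsum2 k (by simp [h1, h2])
  simpa using this

/-- Two orthogonal roots of `ℤⁿ` sharing a coordinate are congruent mod 2. -/
theorem share_even {κ : Type*} [Fintype κ] [DecidableEq κ] (a b : κ → ℤ) (ha : a ⬝ᵥ a = 2)
    (hb : b ⬝ᵥ b = 2) (hab : a ⬝ᵥ b = 0) (s : κ) (hs : a s = 1 ∨ a s = -1) (hs' : b s = 1 ∨ b s = -1)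
    (e : κ → ℤ) : Even (e ⬝ᵥ a + e ⬝ᵥ b) := by
  have key : ∀ k, Even (a k + b k) := by
    have h1 : ∑ k, (a k + (a s * b s) * b k) * (a k + (a s * b s) * b k) = 4 := by
      have hsq : (a s * b s) * (a s * b s) = 1 := by
        rcases hs with h | h <;> rcases hs' with h' | h' <;> rw [h, h'] <;> norm_num
      have : ∀ k, (a k + (a s * b s) * b k) * (a k + (a s * b s) * b k) =
          a k * a k + (2 * (a s * b s)) * (a k * b k) + b k * b k := by
        intro k
        linear_combination (b k * b k) * hsq
      simp_rw [this]
      rw [Finset.sum_add_distrib, Finset.sum_add_distrib, ← Finset.mul_sum]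
      have e1 : ∑ k, a k * a k = 2 := ha
      have e2 : ∑ k, b k * b k = 2 := hb
      have e3 : ∑ k, a k * b k = 0 := hab
      rw [e1, e2, e3]; norm_num
    have h2 : (a s + (a s * b s) * b s) * (a s + (a s * b s) * b s) = 4 := by
      rcases hs with h | h <;> rcases hs' with h' | h' <;> rw [h, h'] <;> norm_num
    rw [← Finset.add_sum_erase _ _ (Finset.mem_univ s), h2] at h1
    have h3 : ∑ k ∈ Finset.univ.erase s, (a k + (a s * b s) * b k) * (a k + (a s * b s) * b k) = 0 := by
      linarith
    rw [Finset.sum_eq_zero_iff_of_nonneg (fun i _ => mul_self_nonneg _)] at h3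
    intro k
    by_cases hk : k = s
    · subst hk
      rcases hs with h | h <;> rcases hs' with h' | h' <;> rw [h, h'] <;> decide
    · have := h3 k (by simp [hk])
      have h4 : a k + (a s * b s) * b k = 0 := by simpa using this
      rcases hs with h | h <;> rcases hs' with h' | h' <;> rw [h, h'] at h4 <;>
        rw [Int.even_iff] <;> omega
  rw [← dotProduct_add]
  refine Finset.even_sum _ fun k _ => ?_
  exact (key k).mul_left _

theorem d4_int {κ : Type*} [Fintype κ] [DecidableEq κ] (c : κ → ℤ) (a : Fin 3 → κ → ℤ)
    (hc : c ⬝ᵥ c = 2) (ha : ∀ i, a i ⬝ᵥ a i = 2) (hca : ∀ i, c ⬝ᵥ a i = -1)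
    (hab : ∀ i j, i ≠ j → a i ⬝ᵥ a j = 0) :
    ∃ i j, i < j ∧ ∀ e : κ → ℤ, Even (e ⬝ᵥ a i + e ⬝ᵥ a j) := by
  obtain ⟨s, t, hst, hs, ht, hk⟩ := int_root_struct c hc
  have hor : ∀ i, ¬ (a i s = 1 ∨ a i s = -1) → (a i t = 1 ∨ a i t = -1) := by
    intro i hi
    have hpair : c s * a i s + c t * a i t = -1 := by
      rw [← hca i, ← Finset.sum_pair (f := fun k => c k * a i k) hst]
      refine Finset.sum_subset (Finset.subset_univ _) fun k _ hk' => ?_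
      simp only [Finset.mem_insert, Finset.mem_singleton, not_or] at hk'
      rw [hk k hk'.1 hk'.2, zero_mul]
    have b : ∀ k, -1 ≤ a i k ∧ a i k ≤ 1 := by
      intro k
      have h := Finset.single_le_sum (f := fun k => a i k * a i k) (fun j _ => mul_self_nonneg _)
        (Finset.mem_univ k)
      have h' : a i k * a i k ≤ 2 := h.trans_eq (ha i)
      constructor <;> nlinarith
    have bs := b s
    have bt := b t
    rcases hs with h | h <;> rcases ht with h' | h' <;> rw [h, h'] at hpair <;> omega
  have pig : ∃ i j : Fin 3, i < j ∧ ((a i s = 1 ∨ a i s = -1) ↔ (a j s = 1 ∨ a j s = -1)) := by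
    by_contra! hcon
    have h01 := hcon 0 1 (by decide)
    have h02 := hcon 0 2 (by decide)
    have h12 := hcon 1 2 (by decide)
    tauto
  obtain ⟨i, j, hij, hiff⟩ := pig
  refine ⟨i, j, hij, fun e => ?_⟩
  by_cases h : a i s = 1 ∨ a i s = -1
  · exact share_even _ _ (ha i) (ha j) (hab i j hij.ne) s h (hiff.mp h) e
  · exact share_even _ _ (ha i) (ha j) (hab i j hij.ne) t (hor i h) (hor j (fun h' => h (hiff.mpr h'))) e

/-! ### Orthogonal roots in `A₁₅ ⊕ D₉` -/

theorem bessel {κ ι : Type*} [Fintype κ] [Fintype ι] [DecidableEq ι] (v : ι → κ → ℚ)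
    (hv : ∀ i j, v i ⬝ᵥ v j = if i = j then 2 else 0) (u : κ → ℚ) :
    ∑ i, (u ⬝ᵥ v i) * (u ⬝ᵥ v i) ≤ 2 * (u ⬝ᵥ u) := by
  let S : κ → ℚ := ∑ i, (u ⬝ᵥ v i) • v i
  have h1 : u ⬝ᵥ S = ∑ i, (u ⬝ᵥ v i) * (u ⬝ᵥ v i) := by
    simp only [S, dotProduct_sum, dotProduct_smul, smul_eq_mul]
  have h2 : S ⬝ᵥ S = 2 * ∑ i, (u ⬝ᵥ v i) * (u ⬝ᵥ v i) := by
    have : ∀ i, S ⬝ᵥ v i = 2 * (u ⬝ᵥ v i) := by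
      intro i
      simp only [S, sum_dotProduct, smul_dotProduct, smul_eq_mul, hv]
      simp [mul_comm]
    conv_lhs => arg 2; simp only [S]
    simp only [dotProduct_sum, dotProduct_smul, smul_eq_mul, this]
    rw [Finset.mul_sum]
    exact Finset.sum_congr rfl fun i _ => by ring
  have h3 : 0 ≤ ((2 : ℚ) • u - S) ⬝ᵥ ((2 : ℚ) • u - S) :=
    Finset.sum_nonneg fun i _ => mul_self_nonneg _
  rw [sub_dotProduct, dotProduct_sub, dotProduct_sub, smul_dotProduct, dotProduct_smul,
    smul_dotProduct, dotProduct_smul, dotProduct_comm S u, h1, h2] at h3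
  simp only [smul_eq_mul] at h3
  linarith

theorem orth_bound {ι : Type*} [Fintype ι] [DecidableEq ι] (v : ι → (Fin 16 ⊕ Fin 9) → ℤ)
    (hv : ∀ i j, v i ⬝ᵥ v j = if i = j then 2 else 0)
    (h0 : ∀ i, ∑ k : Fin 16, v i (Sum.inl k) = 0) : Fintype.card ι ≤ 17 := by
  let w : ι → (Fin 16 ⊕ Fin 9) → ℚ := fun i k => (v i k : ℚ)
  have hw : ∀ i j, w i ⬝ᵥ w j = if i = j then 2 else 0 := by
    intro i j
    have : w i ⬝ᵥ w j = ((v i ⬝ᵥ v j : ℤ) : ℚ) := by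
      simp [w, dotProduct]
    rw [this, hv]; split_ifs <;> norm_num
  have hA : ∀ k : Fin 16, ∑ i, v i (Sum.inl k) * v i (Sum.inl k) ≤ 1 := by
    intro k
    have := bessel w hw (Sum.elim (Pi.single k 1 - fun _ => 1 / 16) 0)
    have e1 : ∀ i, (Sum.elim (Pi.single k 1 - fun _ => 1 / 16) 0 : (Fin 16 ⊕ Fin 9) → ℚ) ⬝ᵥ w i
        = v i (Sum.inl k) := by
      intro i
      have h0' : ∑ k : Fin 16, (v i (Sum.inl k) : ℚ) = 0 := by exact_mod_cast h0 i
      simp only [dotProduct, Fintype.sum_sum_type, Sum.elim_inl, Sum.elim_inr, Pi.sub_apply,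
        sub_mul, Finset.sum_sub_distrib, w, ← Finset.mul_sum, h0']
      simp [Pi.single_apply]
    have e2 : (Sum.elim (Pi.single k 1 - fun _ => 1 / 16) 0 : (Fin 16 ⊕ Fin 9) → ℚ) ⬝ᵥ
        (Sum.elim (Pi.single k 1 - fun _ => 1 / 16) 0) = 15 / 16 := by
      simp only [dotProduct, Fintype.sum_sum_type, Sum.elim_inl, Sum.elim_inr, Pi.sub_apply,
        sub_mul, mul_sub, Finset.sum_sub_distrib]
      simp [Pi.single_apply]
      norm_num
    rw [e2] at this
    simp only [e1] at this
    have h2 : ((∑ i, v i (Sum.inl k) * v i (Sum.inl k) : ℤ) : ℚ) < 2 := by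
      push_cast
      linarith
    have h3 : (∑ i, v i (Sum.inl k) * v i (Sum.inl k) : ℤ) < 2 := by exact_mod_cast h2
    omega
  have hD : ∀ k : Fin 9, ∑ i, v i (Sum.inr k) * v i (Sum.inr k) ≤ 2 := by
    intro k
    have := bessel w hw (Pi.single (Sum.inr k) 1)
    simp only [single_dotProduct, one_mul, Pi.single_eq_same, mul_one, w] at this
    exact_mod_cast this
  have tot : ∑ i, v i ⬝ᵥ v i = 2 * Fintype.card ι := by
    simp [hv, mul_comm]
  have tot2 : ∑ i, v i ⬝ᵥ v i = ∑ k : Fin 16, ∑ i, v i (Sum.inl k) * v i (Sum.inl k) +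
      ∑ k : Fin 9, ∑ i, v i (Sum.inr k) * v i (Sum.inr k) := by
    simp only [dotProduct, Fintype.sum_sum_type, Finset.sum_add_distrib]
    rw [Finset.sum_comm, Finset.sum_comm (s := Finset.univ (α := ι)) (t := Finset.univ (α := Fin 9))]
  have b1 : ∑ k : Fin 16, ∑ i, v i (Sum.inl k) * v i (Sum.inl k) ≤ ∑ k : Fin 16, (1 : ℤ) :=
    Finset.sum_le_sum fun k _ => hA k
  have b2 : ∑ k : Fin 9, ∑ i, v i (Sum.inr k) * v i (Sum.inr k) ≤ ∑ k : Fin 9, (2 : ℤ) :=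
    Finset.sum_le_sum fun k _ => hD k
  simp at b1 b2
  have : (2 * Fintype.card ι : ℤ) ≤ 34 := by
    rw [← tot, tot2]; linarith
  omega

/-! ### Explicit `E₈` -/

/-- Explicit description of `E₈`. -/
def E8x (v : Fin 8 → ℚ) : Prop := IntOrHalf v ∧ ∃ k : ℤ, ∑ i, v i = 2 * k

theorem E8x_even {v : Fin 8 → ℚ} (hv : E8x v) : ∃ m : ℤ, v ⬝ᵥ v = 2 * m := by
  obtain ⟨hv | hv, k, hk⟩ := hv
  · choose m hm using hv
    have he : ∀ i, ∃ t : ℤ, m i * m i = 2 * t + m i := by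
      intro i
      obtain ⟨t, ht⟩ := Int.even_mul_pred_self (m i)
      exact ⟨t, by linarith⟩
    choose t ht using he
    refine ⟨∑ i, t i + k, ?_⟩
    have : v ⬝ᵥ v = ∑ i, (2 * (t i : ℚ) + v i) := by
      refine Finset.sum_congr rfl fun i _ => ?_
      rw [hm i]
      exact_mod_cast ht i
    rw [this, Finset.sum_add_distrib, hk, ← Finset.mul_sum]
    push_cast; ring
  · choose m hm using hv
    have he : ∀ i, ∃ t : ℤ, m i * (m i + 1) = 2 * t := by
      intro i
      obtain ⟨t, ht⟩ := Int.even_mul_succ_self (m i)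
      exact ⟨t, by linarith⟩
    choose t ht using he
    refine ⟨∑ i, t i + 1, ?_⟩
    have : v ⬝ᵥ v = ∑ i, (2 * (t i : ℚ) + 1 / 4) := by
      refine Finset.sum_congr rfl fun i _ => ?_
      rw [hm i]
      have : (m i * (m i + 1) : ℚ) = 2 * t i := by exact_mod_cast ht i
      linarith
    rw [this, Finset.sum_add_distrib, ← Finset.mul_sum]
    simp
    ring

theorem mem_latE8_half {v : Fin 8 → ℚ} (h : ∀ i, ∃ m : ℤ, v i = m + 1 / 2)
    (hk : ∃ k : ℤ, ∑ i, v i = 2 * k) : v ∈ latE8 := by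
  have : v = (v - fun _ => (1 : ℚ) / 2) + fun _ => (1 : ℚ) / 2 := by simp
  rw [this]
  refine Submodule.add_mem_sup ⟨fun i => ?_, ?_⟩ (Submodule.mem_span_singleton_self _)
  · obtain ⟨m, hm⟩ := h i
    exact ⟨m, by rw [Pi.sub_apply, hm]; ring⟩
  · obtain ⟨k, hk⟩ := hk
    refine ⟨k - 2, ?_⟩
    simp only [Pi.sub_apply, Finset.sum_sub_distrib, hk]
    simp
    ring

/-- The vector `a eᵢ + b eⱼ`. -/
def sr {n : ℕ} (i : Fin n) (a : ℤ) (j : Fin n) (b : ℤ) : Fin n → ℚ :=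
  Pi.single i (a : ℚ) + Pi.single j (b : ℚ)

theorem sr_dot {n : ℕ} (i : Fin n) (a : ℤ) (j : Fin n) (b : ℤ) (x : Fin n → ℚ) :
    sr i a j b ⬝ᵥ x = a * x i + b * x j := by
  simp [sr, add_dotProduct, single_dotProduct]

theorem sr_apply {n : ℕ} (i : Fin n) (a : ℤ) (j : Fin n) (b : ℤ) (k : Fin n) :
    sr i a j b k = (if k = i then (a : ℚ) else 0) + (if k = j then (b : ℚ) else 0) := by
  simp [sr, Pi.single_apply]

theorem sr_mem {n : ℕ} (i : Fin n) (a : ℤ) (j : Fin n) (b : ℤ) (h : Even (a + b)) :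
    sr i a j b ∈ latD n := by
  refine ⟨fun k => ?_, ?_⟩
  · refine ⟨(if k = i then a else 0) + (if k = j then b else 0), ?_⟩
    rw [sr_apply]; push_cast; rfl
  · obtain ⟨r, hr⟩ := h
    refine ⟨r, ?_⟩
    simp only [sr_apply, Finset.sum_add_distrib, Finset.sum_ite_eq', Finset.mem_univ, if_true]
    have : (a + b : ℚ) = r + r := by exact_mod_cast hr
    rw [this]; ring

theorem sr_mem8 (i : Fin 8) (a : ℤ) (j : Fin 8) (b : ℤ) (h : Even (a + b)) :
    sr i a j b ∈ latE8 := Submodule.mem_sup_left (sr_mem i a j b h)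

/-- Roots of `E₈` pairing integrally with `q`. -/
def G8 (q v : Fin 8 → ℚ) : Prop := v ∈ latE8 ∧ v ⬝ᵥ v = 2 ∧ ∃ m : ℤ, v ⬝ᵥ q = m

theorem d4_abs {κ : Type*} [Fintype κ] [DecidableEq κ] {q : Fin 8 → ℚ} (T : (Fin 8 → ℚ) → κ → ℤ)
    (hT : ∀ v v', G8 q v → G8 q v' → ((T v ⬝ᵥ T v' : ℤ) : ℚ) = v ⬝ᵥ v')
    (c : Fin 8 → ℚ) (a : Fin 3 → Fin 8 → ℚ) (hc : G8 q c) (ha : ∀ i, G8 q (a i))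
    (hca : ∀ i, c ⬝ᵥ a i = -1) (hab : ∀ i j, i < j → a i ⬝ᵥ a j = 0)
    (hodd : ∀ i j, i < j → ∃ e, G8 q e ∧ ∃ k : ℤ, e ⬝ᵥ a i + e ⬝ᵥ a j = 2 * k + 1) : False := by
  obtain ⟨i, j, hij, h⟩ := d4_int (T c) (fun i => T (a i))
    (by exact_mod_cast (hT _ _ hc hc).trans hc.2.1)
    (fun i => by exact_mod_cast (hT _ _ (ha i) (ha i)).trans (ha i).2.1)
    (fun i => by exact_mod_cast (hT _ _ hc (ha i)).trans (hca i))
    (fun i j hij => by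
      rcases lt_or_gt_of_ne hij with h | h
      · exact_mod_cast (hT _ _ (ha i) (ha j)).trans (hab i j h)
      · have := (hT _ _ (ha j) (ha i)).trans (hab j i h)
        rw [dotProduct_comm]
        exact_mod_cast this)
  obtain ⟨e, he, k, hk⟩ := hodd i j hij
  obtain ⟨r, hr⟩ := h (T e)
  rw [← hT _ _ he (ha i), ← hT _ _ he (ha j)] at hk
  have : T e ⬝ᵥ T (a i) + T e ⬝ᵥ T (a j) = 2 * k + 1 := by exact_mod_cast hk
  omega

theorem G8_sr {q : Fin 8 → ℚ} {i j : Fin 8} (hij : i ≠ j) {s t : ℤ} (hs : s = 1 ∨ s = -1)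
    (ht : t = 1 ∨ t = -1) (h : ∃ m : ℤ, s * q i + t * q j = m) : G8 q (sr i s j t) := by
  refine ⟨sr_mem8 _ _ _ _ ?_, ?_, ?_⟩
  · rcases hs with rfl | rfl <;> rcases ht with rfl | rfl <;> decide
  · rw [sr_dot, sr_apply, sr_apply]
    simp only [hij, hij.symm, if_true, if_false]
    rcases hs with rfl | rfl <;> rcases ht with rfl | rfl <;> norm_num
  · rw [sr_dot]; exact h

theorem a3_half {κ : Type*} [Fintype κ] [DecidableEq κ] {q : Fin 8 → ℚ} (T : (Fin 8 → ℚ) → κ → ℤ)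
    (hT : ∀ v v', G8 q v → G8 q v' → ((T v ⬝ᵥ T v' : ℤ) : ℚ) = v ⬝ᵥ v')
    (hw : ∀ i, ∃ m : ℤ, 2 * q i = m + 1 / 2) (hs : ∃ k : ℤ, ∑ i, 2 * q i = 2 * k)
    (hn : ∃ r : ℤ, ∑ i, (2 * q i) * (2 * q i) = 4 * r + 2) : False := by
  have h1 : ∀ i, ∃ s m : ℤ, (s = 1 ∨ s = -1) ∧ q i = s * (1 / 4 + m) := by
    intro i
    obtain ⟨n, hn⟩ := hw i
    rcases Int.even_or_odd' n with ⟨l, rfl | rfl⟩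
    · exact ⟨1, l, Or.inl rfl, by push_cast at hn ⊢; linarith⟩
    · exact ⟨-1, -l - 1, Or.inr rfl, by push_cast at hn ⊢; linarith⟩
  choose s m hs1 hq using h1
  have hsq : ∀ i, (s i : ℚ) * s i = 1 := by
    intro i; rcases hs1 i with h | h <;> rw [h] <;> norm_num
  obtain ⟨k, hk⟩ := hs
  obtain ⟨r, hr⟩ := hn
  have hr' : ∑ i, (m i + 2 * (m i * m i)) = 2 * r := by
    have e : ∀ i, (2 * q i) * (2 * q i) = 2 * ((m i + 2 * (m i * m i) : ℤ) : ℚ) + 1 / 4 := by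
      intro i
      rw [hq i]; push_cast
      linear_combination (4 * (1 / 4 + (m i : ℚ)) ^ 2) * hsq i
    simp only [e, Finset.sum_add_distrib, ← Finset.mul_sum] at hr
    simp at hr
    have : (∑ i, ((m i : ℚ) + 2 * (m i * m i))) = 2 * r := by
      linarith
    exact_mod_cast this
  have hk' : ∑ i, (s i + 4 * (s i * m i)) = 4 * k := by
    have e : ∀ i, 2 * q i = ((s i + 4 * (s i * m i) : ℤ) : ℚ) / 2 := by
      intro i; rw [hq i]; push_cast; ring
    simp only [e, ← Finset.sum_div] at hk
    have : (∑ i, ((s i + 4 * (s i * m i) : ℤ) : ℚ)) = 4 * k := by linarith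
    exact_mod_cast this
  rw [Fin.sum_univ_eight] at hr' hk'
  let c : Fin 8 → ℚ := ![s 0 / 2, s 1 / 2, s 2 / 2, s 3 / 2, -s 4 / 2, -s 5 / 2, -s 6 / 2, -s 7 / 2]
  have hodd : ∀ i, ∃ l : ℤ, (s i : ℚ) / 2 = l + 1 / 2 ∧ (-s i : ℚ) / 2 = (-l - 1 : ℤ) + 1 / 2 := by
    intro i
    rcases hs1 i with h | h
    · exact ⟨0, by rw [h]; norm_num⟩
    · exact ⟨-1, by rw [h]; norm_num⟩
  have hc : G8 q c := by
    refine ⟨mem_latE8_half ?_ ?_, ?_, ?_⟩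
    · choose l hl hl' using hodd
      intro i
      fin_cases i
      · exact ⟨_, hl 0⟩
      · exact ⟨_, hl 1⟩
      · exact ⟨_, hl 2⟩
      · exact ⟨_, hl 3⟩
      · exact ⟨_, hl' 4⟩
      · exact ⟨_, hl' 5⟩
      · exact ⟨_, hl' 6⟩
      · exact ⟨_, hl' 7⟩
    · have : ∃ z : ℤ, s 0 + s 1 + s 2 + s 3 - s 4 - s 5 - s 6 - s 7 = 4 * z := by
        have : ∃ y, s 4 + s 5 + s 6 + s 7 = 2 * y := by
          have h4 := hs1 4
          have h5 := hs1 5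
          have h6 := hs1 6
          have h7 := hs1 7
          exact ⟨(s 4 + s 5 + s 6 + s 7) / 2, by omega⟩
        obtain ⟨y, hy⟩ := this
        refine ⟨k - y - (s 0 * m 0 + s 1 * m 1 + s 2 * m 2 + s 3 * m 3 + s 4 * m 4 + s 5 * m 5 + s 6 * m 6
          + s 7 * m 7), by linarith⟩
      obtain ⟨z, hz⟩ := this
      refine ⟨z, ?_⟩
      have hz' : (s 0 + s 1 + s 2 + s 3 - s 4 - s 5 - s 6 - s 7 : ℚ) = 4 * z := by exact_mod_cast hz
      rw [Fin.sum_univ_eight]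
      simp [c]
      linarith
    · simp only [dotProduct, Fin.sum_univ_eight]
      simp [c]
      linear_combination (hsq 0 + hsq 1 + hsq 2 + hsq 3 + hsq 4 + hsq 5 + hsq 6 + hsq 7) / 4
    · refine ⟨r - (m 0 * m 0 + m 1 * m 1 + m 2 * m 2 + m 3 * m 3 + m 4 * m 4 + m 5 * m 5 + m 6 * m 6 + m 7 * m 7)
        - m 4 - m 5 - m 6 - m 7, ?_⟩
      have hr'' : (r : ℚ) = (m 0 + 2 * (m 0 * m 0) + (m 1 + 2 * (m 1 * m 1)) + (m 2 + 2 * (m 2 * m 2)) + (m 3 + 2 * (m 3 * m 3)) + (m 4 + 2 * (m 4 * m 4)) + (m 5 + 2 * (m 5 * m 5)) + (m 6 + 2 * (m 6 * m 6)) + (m 7 + 2 * (m 7 * m 7))) / 2 := by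
        rw [eq_div_iff (by norm_num), mul_comm]
        exact_mod_cast hr'.symm
      simp only [dotProduct, Fin.sum_univ_eight, hq]
      simp [c]
      rw [hr'']
      linear_combination (hsq 0 * (1 / 4 + m 0) + hsq 1 * (1 / 4 + m 1) + hsq 2 * (1 / 4 + m 2) + hsq 3 * (1 / 4 + m 3) - hsq 4 * (1 / 4 + m 4) - hsq 5 * (1 / 4 + m 5) - hsq 6 * (1 / 4 + m 6) - hsq 7 * (1 / 4 + m 7)) / 2
  have hneg : ∀ i, -s i = 1 ∨ -s i = -1 := fun i => by have := hs1 i; omega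
  have g1 : ∀ i j, i ≠ j → G8 q (sr i (s i) j (-s j)) := by
    intro i j hij
    refine G8_sr hij (hs1 i) (hneg j) ⟨m i - m j, ?_⟩
    rw [hq i, hq j]; push_cast
    linear_combination hsq i * (1 / 4 + m i) - hsq j * (1 / 4 + m j)
  have g2 : ∀ i j, i ≠ j → G8 q (sr i (-s i) j (s j)) := by
    intro i j hij
    refine G8_sr hij (hneg i) (hs1 j) ⟨m j - m i, ?_⟩
    rw [hq i, hq j]; push_cast
    linear_combination -hsq i * (1 / 4 + m i) + hsq j * (1 / 4 + m j)
  have q0 := hsq 0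
  have q1 := hsq 1
  have q2 := hsq 2
  have q4 := hsq 4
  have q5 := hsq 5
  have q6 := hsq 6
  refine d4_abs T hT c ![sr 0 (-s 0) 4 (s 4), sr 1 (-s 1) 5 (s 5), sr 2 (-s 2) 6 (s 6)] hc ?_ ?_ ?_ ?_
  · intro i
    fin_cases i
    · exact g2 0 4 (by decide)
    · exact g2 1 5 (by decide)
    · exact g2 2 6 (by decide)
  · intro i
    rw [dotProduct_comm]
    fin_cases i
    · change sr _ _ _ _ ⬝ᵥ c = -1
      rw [sr_dot]; simp [c]; linarith
    · change sr _ _ _ _ ⬝ᵥ c = -1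
      rw [sr_dot]; simp [c]; linarith
    · change sr _ _ _ _ ⬝ᵥ c = -1
      rw [sr_dot]; simp [c]; linarith
  · intro i j hij
    fin_cases i <;> fin_cases j <;> simp at hij <;> simp [sr_dot, sr_apply]
  · intro i j hij
    fin_cases i <;> fin_cases j <;> simp at hij
    · exact ⟨_, g1 0 7 (by decide), -1, by simp [sr_dot, sr_apply]; linarith⟩
    · exact ⟨_, g1 0 7 (by decide), -1, by simp [sr_dot, sr_apply]; linarith⟩
    · exact ⟨_, g1 1 7 (by decide), -1, by simp [sr_dot, sr_apply]; linarith⟩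
theorem a3_int {κ : Type*} [Fintype κ] [DecidableEq κ] {q : Fin 8 → ℚ} (T : (Fin 8 → ℚ) → κ → ℤ)
    (hT : ∀ v v', G8 q v → G8 q v' → ((T v ⬝ᵥ T v' : ℤ) : ℚ) = v ⬝ᵥ v')
    (W : Fin 8 → ℤ) (hW : ∀ i, 2 * q i = W i) (f : Fin 5 → Fin 8) (hf : Function.Injective f)
    (hpar : ∀ i j, Even (W (f i) - W (f j))) (d : Fin 8 → ℚ) (hd : G8 q d)
    (hd' : ∀ i, ∃ m : ℤ, d i = m + 1 / 2) : False := by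
  have hne : ∀ i j, i ≠ j → f i ≠ f j := fun i j h h' => h (hf h')
  have g1 : ∀ i j, i ≠ j → G8 q (sr (f i) 1 (f j) (-1)) := by
    intro i j hij
    refine G8_sr (hne i j hij) (Or.inl rfl) (Or.inr rfl) ?_
    obtain ⟨r, hr⟩ := hpar i j
    refine ⟨r, ?_⟩
    have h1 := hW (f i)
    have h2 := hW (f j)
    have : (W (f i) : ℚ) - W (f j) = r + r := by exact_mod_cast hr
    push_cast
    linarith
  have g2 : ∀ i j, i ≠ j → G8 q (sr (f i) 1 (f j) 1) := by
    intro i j hij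
    refine G8_sr (hne i j hij) (Or.inl rfl) (Or.inl rfl) ?_
    obtain ⟨r, hr⟩ := hpar i j
    refine ⟨r + W (f j), ?_⟩
    have h1 := hW (f i)
    have h2 := hW (f j)
    have : (W (f i) : ℚ) - W (f j) = r + r := by exact_mod_cast hr
    push_cast
    linarith
  have hS : ∀ i j (s t : ℤ) k l (s' t' : ℤ), sr (f i) s (f j) t ⬝ᵥ sr (f k) s' (f l) t' =
      s * ((if i = k then (s' : ℚ) else 0) + (if i = l then (t' : ℚ) else 0)) +
      t * ((if j = k then (s' : ℚ) else 0) + (if j = l then (t' : ℚ) else 0)) := by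
    intro i j s t k l s' t'
    rw [sr_dot, sr_apply, sr_apply]
    simp only [hf.eq_iff]
  refine d4_abs T hT (sr (f 1) 1 (f 2) (-1)) ![sr (f 0) 1 (f 1) (-1), sr (f 2) 1 (f 3) (-1), sr (f 2) 1 (f 3) 1]
    (g1 1 2 (by decide)) ?_ ?_ ?_ ?_
  · intro i
    fin_cases i
    · exact g1 0 1 (by decide)
    · exact g1 2 3 (by decide)
    · exact g2 2 3 (by decide)
  · intro i
    fin_cases i
    · change sr _ _ _ _ ⬝ᵥ sr _ _ _ _ = -1
      rw [hS]; simp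
    · change sr _ _ _ _ ⬝ᵥ sr _ _ _ _ = -1
      rw [hS]; simp
    · change sr _ _ _ _ ⬝ᵥ sr _ _ _ _ = -1
      rw [hS]; simp
  · intro i j hij
    fin_cases i <;> fin_cases j <;> simp at hij
    · change sr _ _ _ _ ⬝ᵥ sr _ _ _ _ = 0
      rw [hS]; simp
    · change sr _ _ _ _ ⬝ᵥ sr _ _ _ _ = 0
      rw [hS]; simp
    · change sr _ _ _ _ ⬝ᵥ sr _ _ _ _ = 0
      rw [hS]; simp
  · intro i j hij
    fin_cases i <;> fin_cases j <;> simp at hij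
    · refine ⟨_, g1 0 4 (by decide), 0, ?_⟩
      change sr _ _ _ _ ⬝ᵥ sr _ _ _ _ + sr _ _ _ _ ⬝ᵥ sr _ _ _ _ = _
      rw [hS, hS]; simp
    · refine ⟨_, g1 0 4 (by decide), 0, ?_⟩
      change sr _ _ _ _ ⬝ᵥ sr _ _ _ _ + sr _ _ _ _ ⬝ᵥ sr _ _ _ _ = _
      rw [hS, hS]; simp
    · obtain ⟨m, hm⟩ := hd' (f 2)
      refine ⟨_, hd, m, ?_⟩
      change d ⬝ᵥ sr _ _ _ _ + d ⬝ᵥ sr _ _ _ _ = _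
      rw [dotProduct_comm, sr_dot, dotProduct_comm, sr_dot, hm]
      push_cast; ring

theorem pick5 (S : Finset (Fin 8)) (h : 5 ≤ S.card) :
    ∃ f : Fin 5 → Fin 8, Function.Injective f ∧ ∀ i, f i ∈ S := by
  obtain ⟨t, hts, ht⟩ := Finset.exists_subset_card_eq h
  exact ⟨t.orderEmbOfFin ht, (t.orderEmbOfFin ht).injective, fun i => hts (t.orderEmbOfFin_mem ht i)⟩

theorem a3 {κ : Type*} [Fintype κ] [DecidableEq κ] {q : Fin 8 → ℚ} (T : (Fin 8 → ℚ) → κ → ℤ)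
    (hT : ∀ v v', G8 q v → G8 q v' → ((T v ⬝ᵥ T v' : ℤ) : ℚ) = v ⬝ᵥ v')
    (hq : E8x ((2 : ℚ) • q))
    (hn : q = 0 ∨ ∃ r : ℤ, ((2 : ℚ) • q) ⬝ᵥ ((2 : ℚ) • q) = 4 * r + 2) : False := by
  obtain ⟨hi, k, hk⟩ := hq
  simp only [Pi.smul_apply, smul_eq_mul] at hk
  have hone : ∃ z : ℤ, ∑ _i : Fin 8, (1 : ℚ) / 2 = 2 * z := ⟨2, by norm_num⟩
  rcases hn with rfl | ⟨r, hr⟩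
  · refine a3_int T hT (fun _ => 0) (by simp) (Fin.castLE (by norm_num)) (Fin.castLE_injective _) (by simp)
      (fun _ => 1 / 2) ⟨mem_latE8_half (fun _ => ⟨0, by norm_num⟩) hone, ?_, 0, by simp⟩
      (fun _ => ⟨0, by norm_num⟩)
    simp [dotProduct]; norm_num
  rcases hi with hi | hi
  swap
  · exact a3_half T hT hi ⟨k, hk⟩ ⟨r, hr⟩
  choose W hW using hi
  simp only [Pi.smul_apply, smul_eq_mul] at hW
  have hr1 : ∑ i, W i * W i = 4 * r + 2 := by
    have : ∑ i, (W i : ℚ) * W i = 4 * r + 2 := by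
      rw [← hr]
      exact Finset.sum_congr rfl fun i _ => by rw [← hW i]; simp
    exact_mod_cast this
  have hk1 : ∑ i, W i = 2 * k := by
    have : ∑ i, (W i : ℚ) = 2 * k := by
      rw [← hk]
      exact Finset.sum_congr rfl fun i _ => by rw [← hW i]
    exact_mod_cast this
  let S : Finset (Fin 8) := Finset.univ.filter fun i => Odd (W i)
  have hcard : ∃ t : ℤ, (S.card : ℤ) = 4 * t + 2 := by
    have he : ∀ i, ∃ t : ℤ, W i * W i = 4 * t + if Odd (W i) then 1 else 0 := by
      intro i
      split_ifs with h
      · obtain ⟨l, hl⟩ := h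
        exact ⟨l * l + l, by rw [hl]; ring⟩
      · obtain ⟨l, hl⟩ := Int.not_odd_iff_even.mp h
        exact ⟨l * l, by rw [hl]; ring⟩
    choose t ht using he
    simp only [ht, Finset.sum_add_distrib, ← Finset.mul_sum] at hr1
    simp only [Finset.sum_boole] at hr1
    exact ⟨r - ∑ i, t i, by simp only [S]; linarith⟩
  have hle : S.card ≤ 8 := (Finset.card_le_univ S).trans_eq (by simp)
  have hc : S.card + Sᶜ.card = 8 := by rw [Finset.card_add_card_compl]; simp
  obtain ⟨t, ht⟩ := hcard
  have h26 : S.card = 2 ∨ S.card = 6 := by omega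
  obtain ⟨i₀, hi₀⟩ : S.Nonempty := by rw [← Finset.card_pos]; omega
  obtain ⟨j₀, hj₀⟩ : Sᶜ.Nonempty := by rw [← Finset.card_pos]; omega
  have hio : Odd (W i₀) := by simpa [S] using hi₀
  have hje : Even (W j₀) := by simpa [S] using hj₀
  have hij : i₀ ≠ j₀ := by
    rintro rfl
    exact Int.not_odd_iff_even.mpr hje hio
  obtain ⟨f, hf, hpar⟩ : ∃ f : Fin 5 → Fin 8, Function.Injective f ∧ ∀ i j, Even (W (f i) - W (f j)) := by
    rcases h26 with h | h
    · obtain ⟨f, hf, hm⟩ := pick5 Sᶜ (by omega)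
      refine ⟨f, hf, fun i j => ?_⟩
      have e : ∀ i, Even (W (f i)) := fun i => by simpa [S] using hm i
      exact (e i).sub (e j)
    · obtain ⟨f, hf, hm⟩ := pick5 S (by omega)
      refine ⟨f, hf, fun i j => ?_⟩
      have e : ∀ i, Odd (W (f i)) := fun i => by simpa [S] using hm i
      exact (e i).sub_odd (e j)
  have hdq : (fun _ => (1 : ℚ) / 2 : Fin 8 → ℚ) ⬝ᵥ q = k / 2 := by
    simp only [dotProduct, ← Finset.mul_sum]
    rw [← Finset.mul_sum] at hk
    linarith
  have hdd : (fun _ => (1 : ℚ) / 2 : Fin 8 → ℚ) ⬝ᵥ (fun _ => (1 : ℚ) / 2) = 2 := by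
    simp [dotProduct]; norm_num
  rcases Int.even_or_odd k with ⟨l, hl⟩ | hko
  · refine a3_int T hT W hW f hf hpar (fun _ => 1 / 2)
      ⟨mem_latE8_half (fun _ => ⟨0, by norm_num⟩) hone, hdd, l, ?_⟩
      (fun _ => ⟨0, by norm_num⟩)
    rw [hdq, hl]; push_cast; ring
  · have hh : ∀ i, ∃ m : ℤ, ((fun _ => 1 / 2) - sr i₀ 1 j₀ 1 : Fin 8 → ℚ) i = m + 1 / 2 := by
      intro i
      refine ⟨-(if i = i₀ then 1 else 0) - (if i = j₀ then 1 else 0), ?_⟩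
      rw [Pi.sub_apply, sr_apply]
      push_cast; ring
    refine a3_int T hT W hW f hf hpar ((fun _ => 1 / 2) - sr i₀ 1 j₀ 1)
      ⟨mem_latE8_half hh ⟨1, ?_⟩, ?_, ?_⟩ hh
    · simp only [Pi.sub_apply, sr_apply, Finset.sum_sub_distrib, Finset.sum_add_distrib, Finset.sum_ite_eq',
        Finset.mem_univ, if_true]
      norm_num
    · rw [sub_dotProduct, dotProduct_sub, dotProduct_sub, hdd, dotProduct_comm _ (sr i₀ 1 j₀ 1), sr_dot, sr_dot,
        sr_apply, sr_apply]
      simp [hij, hij.symm]; norm_num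
    · obtain ⟨l, hl⟩ := hko
      obtain ⟨m, hm⟩ := hio
      obtain ⟨n, hn⟩ := hje
      refine ⟨l - m - n, ?_⟩
      rw [sub_dotProduct, hdq, sr_dot]
      have h1 := hW i₀
      have h2 := hW j₀
      rw [hm] at h1
      rw [hn] at h2
      rw [hl]
      push_cast at h1 h2 ⊢
      linarith
theorem two_good {q : Fin 8 → ℚ} (hq : IntOrHalf ((2 : ℚ) • q)) :
    ∃ v : Fin 2 → Fin 8 → ℚ, (∀ i, G8 q (v i)) ∧ v 0 ⬝ᵥ v 1 = 0 := by
  rcases hq with hq | hq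
  · choose W hW using hq
    simp only [Pi.smul_apply, smul_eq_mul] at hW
    have key : ∀ i j : Fin 8, i ≠ j → Even (W i - W j) →
        ∃ v : Fin 2 → Fin 8 → ℚ, (∀ i, G8 q (v i)) ∧ v 0 ⬝ᵥ v 1 = 0 := by
      intro i j hij h
      obtain ⟨r, hr⟩ := h
      have hr' : (W i : ℚ) - W j = r + r := by exact_mod_cast hr
      have h1 := hW i
      have h2 := hW j
      refine ⟨![sr i 1 j 1, sr i 1 j (-1)], ?_, ?_⟩
      · intro k
        fin_cases k
        · exact G8_sr hij (Or.inl rfl) (Or.inl rfl) ⟨r + W j, by push_cast; linarith⟩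
        · exact G8_sr hij (Or.inl rfl) (Or.inr rfl) ⟨r, by push_cast; linarith⟩
      · change sr _ _ _ _ ⬝ᵥ sr _ _ _ _ = 0
        rw [sr_dot, sr_apply, sr_apply]; simp [hij, hij.symm]
    by_cases h01 : Even (W 0 - W 1)
    · exact key 0 1 (by decide) h01
    by_cases h02 : Even (W 0 - W 2)
    · exact key 0 2 (by decide) h02
    refine key 1 2 (by decide) ?_
    rw [Int.even_iff] at *
    omega
  · have key : ∀ i j : Fin 8, i ≠ j → ∃ t : ℤ, G8 q (sr i 1 j t) := by
      intro i j hij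
      obtain ⟨n, hn⟩ := hq i
      obtain ⟨m, hm⟩ := hq j
      simp only [Pi.smul_apply, smul_eq_mul] at hn hm
      rcases Int.even_or_odd' (n - m) with ⟨r, hr | hr⟩
      · refine ⟨-1, G8_sr hij (Or.inl rfl) (Or.inr rfl) ⟨r, ?_⟩⟩
        have hr' : (n : ℚ) - m = 2 * r := by exact_mod_cast hr
        push_cast; linarith
      · refine ⟨1, G8_sr hij (Or.inl rfl) (Or.inl rfl) ⟨r + m + 1, ?_⟩⟩
        have hr' : (n : ℚ) - m = 2 * r + 1 := by exact_mod_cast hr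
        push_cast; linarith
    obtain ⟨t, ht⟩ := key 0 1 (by decide)
    obtain ⟨t', ht'⟩ := key 2 3 (by decide)
    refine ⟨![sr 0 1 1 t, sr 2 1 3 t'], ?_, ?_⟩
    · intro k
      fin_cases k
      · exact ht
      · exact ht'
    · change sr _ _ _ _ ⬝ᵥ sr _ _ _ _ = 0
      rw [sr_dot, sr_apply, sr_apply]; simp

theorem pair_class (S : Finset (Fin 16)) (m : ℕ) (h : S.card = m * 2) :
    ∃ σ : Fin m → Fin 2 → Fin 16, (∀ x b, σ x b ∈ S) ∧ ∀ x b y c, σ x b = σ y c → x = y ∧ b = c := by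
  let e := S.equivFinOfCardEq h
  refine ⟨fun x b => (e.symm (finProdFinEquiv (x, b))).1, fun x b => (e.symm _).2, ?_⟩
  intro x b y c hxy
  have h1 := finProdFinEquiv.injective (e.symm.injective (Subtype.ext hxy))
  exact ⟨congrArg Prod.fst h1, congrArg Prod.snd h1⟩

theorem pairing (W : Fin 16 → ℤ) (hev : Even (∑ i, W i * W i)) :
    ∃ m m' : ℕ, m + m' = 8 ∧ ∃ σ : (Fin m ⊕ Fin m') → Fin 2 → Fin 16,
      (∀ x b y c, σ x b = σ y c → x = y ∧ b = c) ∧ ∀ x, Even (W (σ x 0) - W (σ x 1)) := by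
  let S : Finset (Fin 16) := Finset.univ.filter fun i => Odd (W i)
  have hcard : Even S.card := by
    have he : ∀ i, ∃ t : ℤ, W i * W i = 2 * t + if Odd (W i) then 1 else 0 := by
      intro i
      split_ifs with h
      · obtain ⟨l, hl⟩ := h
        exact ⟨2 * l * l + 2 * l, by rw [hl]; ring⟩
      · obtain ⟨l, hl⟩ := Int.not_odd_iff_even.mp h
        exact ⟨2 * l * l, by rw [hl]; ring⟩
    choose t ht using he
    simp only [ht, Finset.sum_add_distrib, ← Finset.mul_sum] at hev
    simp only [Finset.sum_boole] at hev
    have h2 : Even ((S.card : ℤ)) := by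
      have := hev.sub (even_two_mul (∑ i, t i))
      simpa [S] using this
    exact_mod_cast h2
  have hc : S.card + Sᶜ.card = 16 := by rw [Finset.card_add_card_compl]; simp
  obtain ⟨m, hm⟩ := hcard
  obtain ⟨σ, hσ, hσi⟩ := pair_class S m (by omega)
  obtain ⟨τ, hτ, hτi⟩ := pair_class Sᶜ (8 - m) (by omega)
  refine ⟨m, 8 - m, by omega, Sum.elim σ τ, ?_, ?_⟩
  · rintro (x | x) b (y | y) c h
    · obtain ⟨h1, h2⟩ := hσi x b y c h
      exact ⟨by rw [h1], h2⟩
    · have h1 := hτ y c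
      have h2 := hσ x b
      simp only [Sum.elim_inl, Sum.elim_inr] at h
      rw [h] at h2
      exact absurd h2 (Finset.mem_compl.mp h1)
    · have h1 := hτ x b
      have h2 := hσ y c
      simp only [Sum.elim_inl, Sum.elim_inr] at h
      rw [← h] at h2
      exact absurd h2 (Finset.mem_compl.mp h1)
    · obtain ⟨h1, h2⟩ := hτi x b y c h
      exact ⟨by rw [h1], h2⟩
  · rintro (x | x)
    · have e : ∀ b, Odd (W (σ x b)) := fun b => by simpa [S] using hσ x b
      exact (e 0).sub_odd (e 1)
    · have e : ∀ b, Even (W (τ x b)) := fun b => by simpa [S] using hτ x b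
      exact (e 0).sub (e 1)

/-- Roots of `D₁₆ ⊕ E₈` pairing integrally with `(p, q)`. -/
def Good (p : Fin 16 → ℚ) (q : Fin 8 → ℚ) (u : Fin 16 → ℚ) (v : Fin 8 → ℚ) : Prop :=
  u ∈ latD 16 ∧ v ∈ latE8 ∧ u ⬝ᵥ u + v ⬝ᵥ v = 2 ∧ ∃ m : ℤ, u ⬝ᵥ p + v ⬝ᵥ q = m

theorem a1 {p : Fin 16 → ℚ} {q : Fin 8 → ℚ} (T : (Fin 16 → ℚ) → (Fin 8 → ℚ) → (Fin 16 ⊕ Fin 9) → ℤ)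
    (hT : ∀ u v u' v', Good p q u v → Good p q u' v' →
      ((T u v ⬝ᵥ T u' v' : ℤ) : ℚ) = u ⬝ᵥ u' + v ⬝ᵥ v')
    (hT0 : ∀ u v, Good p q u v → ∑ k : Fin 16, T u v (Sum.inl k) = 0)
    (W : Fin 16 → ℤ) (hW : ∀ i, 2 * p i = W i) (hev : Even (∑ i, W i * W i))
    (hq : IntOrHalf ((2 : ℚ) • q)) : False := by
  obtain ⟨m, m', hm, σ, hσ, hpar⟩ := pairing W hev
  obtain ⟨v, hv, hv01⟩ := two_good hq
  have hσ01 : ∀ x, σ x 0 ≠ σ x 1 := fun x h => by simpa using (hσ _ _ _ _ h).2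
  let g : Fin 2 → ℤ := ![1, -1]
  have hg0 : g 0 = 1 := rfl
  have hg1 : g 1 = -1 := rfl
  have hgg : ∀ b, g b = 1 ∨ g b = -1 := by decide
  let U : (((Fin m ⊕ Fin m') × Fin 2) ⊕ Fin 2) → (Fin 16 → ℚ) :=
    Sum.elim (fun x => sr (σ x.1 0) 1 (σ x.1 1) (g x.2)) (fun _ => 0)
  let Z : (((Fin m ⊕ Fin m') × Fin 2) ⊕ Fin 2) → (Fin 8 → ℚ) := Sum.elim (fun _ => 0) v
  have hZ : ∀ x y, U x ⬝ᵥ U y + Z x ⬝ᵥ Z y = if x = y then 2 else 0 := by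
    rintro (⟨x, b⟩ | x) (⟨y, c⟩ | y)
    · simp only [U, Z, Sum.elim_inl, dotProduct_zero, add_zero, sr_dot, sr_apply, Sum.inl.injEq, Prod.mk.injEq]
      by_cases hxy : x = y
      · subst hxy
        simp only [hσ01 x, (hσ01 x).symm, if_true, if_false, true_and]
        fin_cases b <;> fin_cases c <;> simp [g] <;> norm_num
      · have h1 : ∀ b c, σ x b ≠ σ y c := fun b c h => hxy (hσ _ _ _ _ h).1
        simp [h1, hxy]
    · simp [U, Z]
    · simp [U, Z]
    · simp only [U, Z, Sum.elim_inr, dotProduct_zero, zero_add, Sum.inr.injEq]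
      fin_cases x <;> fin_cases y
      · simpa using (hv 0).2.1
      · simpa using hv01
      · rw [dotProduct_comm]; simpa using hv01
      · simpa using (hv 1).2.1
  have hG : ∀ x, Good p q (U x) (Z x) := by
    intro x
    have hn := hZ x x
    rw [if_pos rfl] at hn
    rcases x with ⟨x, b⟩ | x
    · refine ⟨sr_mem _ _ _ _ ?_, Submodule.zero_mem _, hn, ?_⟩
      · rcases hgg b with h | h <;> simp only [h] <;> decide
      · obtain ⟨r, hr⟩ := hpar x
        have hr' : (W (σ x 0) : ℚ) - W (σ x 1) = r + r := by exact_mod_cast hr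
        have h1 := hW (σ x 0)
        have h2 := hW (σ x 1)
        simp only [U, Z, Sum.elim_inl, sr_dot, zero_dotProduct, add_zero]
        rcases hgg b with h | h <;> rw [h]
        · exact ⟨r + W (σ x 1), by push_cast; linarith⟩
        · exact ⟨r, by push_cast; linarith⟩
    · refine ⟨Submodule.zero_mem _, (hv x).1, hn, ?_⟩
      simpa [U, Z] using (hv x).2.2
  have := orth_bound (fun x => T (U x) (Z x)) (fun x y => by
    have h := (hT _ _ _ _ (hG x) (hG y)).trans (hZ x y)
    split_ifs at h ⊢ <;> exact_mod_cast h) (fun x => hT0 _ _ (hG x))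
  simp at this
  omega

theorem coreA {p : Fin 16 → ℚ} {q : Fin 8 → ℚ} (T : (Fin 16 → ℚ) → (Fin 8 → ℚ) → (Fin 16 ⊕ Fin 9) → ℤ)
    (hT : ∀ u v u' v', Good p q u v → Good p q u' v' →
      ((T u v ⬝ᵥ T u' v' : ℤ) : ℚ) = u ⬝ᵥ u' + v ⬝ᵥ v')
    (hT0 : ∀ u v, Good p q u v → ∑ k : Fin 16, T u v (Sum.inl k) = 0)
    (hp : IntOrHalf ((2 : ℚ) • p)) (hq : E8x ((2 : ℚ) • q)) (hn : p ⬝ᵥ p + q ⬝ᵥ q = 3) :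
    Quarter p ∧ ((p ⬝ᵥ p = 1 ∧ q ⬝ᵥ q = 2) ∨ (p ⬝ᵥ p = 2 ∧ q ⬝ᵥ q = 1)) := by
  obtain ⟨m, hm⟩ := E8x_even hq
  have h4 : ∀ {n : ℕ} (x : Fin n → ℚ), ((2 : ℚ) • x) ⬝ᵥ ((2 : ℚ) • x) = 4 * (x ⬝ᵥ x) := by
    intro n x
    rw [smul_dotProduct, dotProduct_smul, smul_eq_mul, smul_eq_mul]; ring
  rcases hp with hp | hp
  · exfalso
    choose W hW using hp
    refine a1 T hT hT0 W hW ?_ hq.1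
    refine ⟨6 - m, ?_⟩
    have h1 : ((2 : ℚ) • p) ⬝ᵥ ((2 : ℚ) • p) = ((∑ i, W i * W i : ℤ) : ℚ) := by
      push_cast
      exact Finset.sum_congr rfl fun i _ => by rw [hW i]
    have : ((∑ i, W i * W i : ℤ) : ℚ) = ((6 - m + (6 - m) : ℤ) : ℚ) := by
      rw [← h1]
      rw [h4] at hm ⊢
      push_cast; linarith
    exact_mod_cast this
  · have hQ : Quarter p := by
      intro i
      obtain ⟨n, hn⟩ := hp i
      simp only [Pi.smul_apply, smul_eq_mul] at hn
      exact ⟨n, by linarith⟩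
    refine ⟨hQ, ?_⟩
    have h1 := quarter_norm_ge hQ
    have h0 := dot_nonneg q
    have hT' : ∀ v v', G8 q v → G8 q v' → ((T 0 v ⬝ᵥ T 0 v' : ℤ) : ℚ) = v ⬝ᵥ v' := by
      have hg : ∀ v, G8 q v → Good p q 0 v := fun v hv =>
        ⟨Submodule.zero_mem _, hv.1, by rw [zero_dotProduct, zero_add]; exact hv.2.1, by
          rw [zero_dotProduct, zero_add]; exact hv.2.2⟩
      intro v v' h h'
      rw [hT _ _ _ _ (hg v h) (hg v' h'), zero_dotProduct, zero_add]
    have hA := a3 (T 0) hT' hq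
    have hm' := hm
    rw [h4] at hm'
    have m0 : 0 ≤ m := by
      have : (0 : ℚ) ≤ m := by linarith
      exact_mod_cast this
    have m4 : m ≤ 4 := by
      have : (m : ℚ) ≤ 4 := by linarith
      exact_mod_cast this
    have : m = 0 ∨ m = 1 ∨ m = 2 ∨ m = 3 ∨ m = 4 := by omega
    rcases this with rfl | rfl | rfl | rfl | rfl
    · exact (hA (Or.inl (eq_zero_of_dot (by push_cast at hm'; linarith)))).elim
    · exact (hA (Or.inr ⟨0, by rw [hm]; norm_num⟩)).elim
    · right; push_cast at hm'; constructor <;> linarith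
    · exact (hA (Or.inr ⟨1, by rw [hm]; norm_num⟩)).elim
    · left; push_cast at hm'; constructor <;> linarith
/-! ### The lattice part -/

theorem even_mem {B : V →ₗ[ℚ] V →ₗ[ℚ] ℚ} (hB : IsPosDefSymm B) {N E : Submodule ℤ V}
    (hN : IsOddNiemeier B N) (hE : IsEvenNeighbor B N E) {x : V} (hx : x ∈ N) {n : ℤ}
    (hn : B x x = 2 * n) : x ∈ E := by
  obtain ⟨hNI, -, ⟨v, hv, k, hk⟩, -⟩ := hN
  obtain ⟨-, -, hev, ⟨-, a, -, -, ha⟩, -⟩ := hE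
  have hvE : v ∉ E := by
    intro h
    obtain ⟨l, hl⟩ := hev v h
    rw [hk] at hl
    have : 2 * k + 1 = 2 * l := by exact_mod_cast hl
    omega
  have hva : v - a ∈ E := by
    rcases ha v hv with h | h
    · exact absurd h.2 hvE
    · exact h.2
  rcases ha x hx with h | h
  · exact h.2
  exfalso
  have hxv : x - v ∈ E := by
    have := E.sub_mem h.2 hva
    simpa using this
  obtain ⟨l, hl⟩ := hev _ hxv
  obtain ⟨m, hm⟩ := hNI.integral hx v hv
  rw [map_sub, map_sub, LinearMap.sub_apply, LinearMap.sub_apply, hn, hB.1 v x, hm, hk] at hl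
  have : 2 * n - m - (m - (2 * k + 1)) = 2 * l := by exact_mod_cast hl
  omega

theorem mem_of_pair {B : V →ₗ[ℚ] V →ₗ[ℚ] ℚ} (hB : IsPosDefSymm B) {N E : Submodule ℤ V}
    (hN : IsOddNiemeier B N) (hE : IsEvenNeighbor B N E) {a r : V} (ha : a ∈ N) (ha3 : B a a = 3)
    (hr : r ∈ E) {m : ℤ} (hra : B r a = m) : r ∈ N := by
  rw [hN.2.1]
  intro y hy
  obtain ⟨n, hn⟩ := hN.1.integral hy y hy
  rcases Int.even_or_odd' n with ⟨l, rfl | rfl⟩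
  · exact hE.1.integral hr y (even_mem hB hN hE hy (n := l) (by rw [hn]; push_cast; ring))
  · obtain ⟨t, ht⟩ := hN.1.integral hy a ha
    have : y - a ∈ E := by
      refine even_mem hB hN hE (N.sub_mem hy ha) (n := l - t + 2) ?_
      rw [map_sub, map_sub, LinearMap.sub_apply, LinearMap.sub_apply, hn, hB.1 a y, ht, ha3]
      push_cast; ring
    obtain ⟨s, hs⟩ := hE.1.integral hr _ this
    refine ⟨s + m, ?_⟩
    rw [map_sub, hra] at hs
    push_cast; linarith

theorem rootSublattice_le (B : V →ₗ[ℚ] V →ₗ[ℚ] ℚ) (E : Submodule ℤ V) : rootSublattice B E ≤ E :=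
  Submodule.span_le.mpr fun _ hv => hv.1

theorem parseval {B : V →ₗ[ℚ] V →ₗ[ℚ] ℚ} (hB : IsPosDefSymm B) {κ : Type*} [Fintype κ] [DecidableEq κ]
    (hcard : Fintype.card κ = Module.finrank ℚ V) (hpos : 0 < Fintype.card κ) (ρ : κ → V)
    (hρ : ∀ k l, B (ρ k) (ρ l) = if k = l then 4 else 0) (x y : V) :
    B x y = ∑ k, (B x (ρ k) / 2) * (B y (ρ k) / 2) := by
  have hli : LinearIndependent ℚ ρ := by
    rw [Fintype.linearIndependent_iff]
    intro c hc l
    have h := congrArg (fun z => B z (ρ l)) hc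
    simp only [map_sum, LinearMap.sum_apply, map_smul, LinearMap.smul_apply, hρ, smul_eq_mul, map_zero,
      LinearMap.zero_apply] at h
    simpa using h
  have : Nonempty κ := Fintype.card_pos_iff.mp hpos
  have hspan := hli.span_eq_top_of_card_eq_finrank hcard
  let z : V := x - ∑ k, (B x (ρ k) / 4) • ρ k
  have hz : ∀ l, B z (ρ l) = 0 := by
    intro l
    simp only [z, map_sub, map_sum, LinearMap.sub_apply, LinearMap.sum_apply, map_smul, LinearMap.smul_apply, hρ,
      smul_eq_mul]
    simp
  have hz' : B z z = 0 := by
    have : z ∈ Submodule.span ℚ (Set.range ρ) := by rw [hspan]; trivial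
    have hle : Submodule.span ℚ (Set.range ρ) ≤ LinearMap.ker (B z) := by
      rw [Submodule.span_le]
      rintro _ ⟨l, rfl⟩
      exact hz l
    exact hle this
  have hz0 : z = 0 := by
    by_contra h
    exact absurd (hB.2 z h) (by rw [hz']; exact lt_irrefl _)
  have hx : x = ∑ k, (B x (ρ k) / 4) • ρ k := sub_eq_zero.mp hz0
  calc B x y = B (∑ k, (B x (ρ k) / 4) • ρ k) y := by rw [← hx]
    _ = ∑ k, (B x (ρ k) / 2) * (B y (ρ k) / 2) := by
      simp only [map_sum, LinearMap.sum_apply, map_smul, LinearMap.smul_apply, smul_eq_mul]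
      exact Finset.sum_congr rfl fun k _ => by rw [hB.1 (ρ k) y]; ring

theorem coords {B : V →ₗ[ℚ] V →ₗ[ℚ] ℚ} (hB : IsPosDefSymm B) (hdim : Module.finrank ℚ V = 24)
    {E : Submodule ℤ V}
    (hr : LatticeIsometric (fun x y => B x y) (prodForm (stdDot 16) (stdDot 8))
      (rootSublattice B E) ((latD 16).prod latE8)) :
    ∃ (P : V →ₗ[ℚ] (Fin 16 → ℚ)) (Q : V →ₗ[ℚ] (Fin 8 → ℚ)) (g : (Fin 16 → ℚ) → (Fin 8 → ℚ) → V),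
      (∀ x y, B x y = P x ⬝ᵥ P y + Q x ⬝ᵥ Q y) ∧
      ∀ u ∈ latD 16, ∀ v ∈ latE8, g u v ∈ E ∧ P (g u v) = u ∧ Q (g u v) = v := by
  obtain ⟨f, hf⟩ := hr
  have hg : ∀ u v, ∃ r : V, ∀ (hu : u ∈ latD 16) (hv : v ∈ latE8), r = (f.symm ⟨(u, v), hu, hv⟩ : V) := by
    intro u v
    by_cases h : u ∈ latD 16 ∧ v ∈ latE8
    · exact ⟨(f.symm ⟨(u, v), h.1, h.2⟩ : V), fun _ _ => rfl⟩
    · exact ⟨0, fun hu hv => absurd ⟨hu, hv⟩ h⟩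
  choose g hg using hg
  have hgB : ∀ u v u' v', u ∈ latD 16 → v ∈ latE8 → u' ∈ latD 16 → v' ∈ latE8 →
      B (g u v) (g u' v') = u ⬝ᵥ u' + v ⬝ᵥ v' := by
    intro u v u' v' hu hv hu' hv'
    rw [hg u v hu hv, hg u' v' hu' hv']
    have := hf (f.symm ⟨(u, v), hu, hv⟩) (f.symm ⟨(u', v'), hu', hv'⟩)
    rw [LinearEquiv.apply_symm_apply, LinearEquiv.apply_symm_apply] at this
    exact this.symm
  have m16 : ∀ i : Fin 16, sr i 1 i 1 ∈ latD 16 := fun i => sr_mem _ _ _ _ (by decide)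
  have m8 : ∀ i : Fin 8, sr i 1 i 1 ∈ latE8 := fun i => sr_mem8 _ _ _ _ (by decide)
  let ρ : Fin 16 ⊕ Fin 8 → V := Sum.elim (fun i => g (sr i 1 i 1) 0) (fun j => g 0 (sr j 1 j 1))
  have hρ : ∀ k l, B (ρ k) (ρ l) = if k = l then 4 else 0 := by
    rintro (i | i) (j | j)
    · simp only [ρ, Sum.elim_inl]
      rw [hgB _ _ _ _ (m16 i) (Submodule.zero_mem _) (m16 j) (Submodule.zero_mem _), sr_dot, sr_apply]
      by_cases h : i = j
      · simp [h]; norm_num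
      · simp [h]
    · simp only [ρ, Sum.elim_inl, Sum.elim_inr]
      rw [hgB _ _ _ _ (m16 i) (Submodule.zero_mem _) (Submodule.zero_mem _) (m8 j)]
      simp
    · simp only [ρ, Sum.elim_inl, Sum.elim_inr]
      rw [hgB _ _ _ _ (Submodule.zero_mem _) (m8 i) (m16 j) (Submodule.zero_mem _)]
      simp
    · simp only [ρ, Sum.elim_inr]
      rw [hgB _ _ _ _ (Submodule.zero_mem _) (m8 i) (Submodule.zero_mem _) (m8 j), sr_dot, sr_apply]
      by_cases h : i = j
      · simp [h]; norm_num
      · simp [h]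
  have hpars := parseval hB (κ := Fin 16 ⊕ Fin 8) (by rw [hdim]; simp) (by simp) ρ hρ
  refine ⟨LinearMap.pi fun i => (1 / 2 : ℚ) • B.flip (ρ (Sum.inl i)),
    LinearMap.pi fun i => (1 / 2 : ℚ) • B.flip (ρ (Sum.inr i)), g, ?_, ?_⟩
  · intro x y
    rw [hpars, Fintype.sum_sum_type]
    simp only [dotProduct, LinearMap.pi_apply, LinearMap.smul_apply, LinearMap.flip_apply, smul_eq_mul]
    congr 1 <;> exact Finset.sum_congr rfl fun i _ => by ring
  · intro u hu v hv
    refine ⟨?_, ?_, ?_⟩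
    · rw [hg u v hu hv]
      exact rootSublattice_le B E (Subtype.mem _)
    · ext i
      simp only [LinearMap.pi_apply, LinearMap.smul_apply, LinearMap.flip_apply, smul_eq_mul, ρ, Sum.elim_inl]
      rw [hgB _ _ _ _ hu hv (m16 i) (Submodule.zero_mem _), dotProduct_comm, sr_dot]
      simp; ring
    · ext i
      simp only [LinearMap.pi_apply, LinearMap.smul_apply, LinearMap.flip_apply, smul_eq_mul, ρ, Sum.elim_inr]
      rw [hgB _ _ _ _ hu hv (Submodule.zero_mem _) (m8 i), dotProduct_comm v, sr_dot]
      simp; ring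

theorem tau {B : V →ₗ[ℚ] V →ₗ[ℚ] ℚ} {E : Submodule ℤ V}
    (hr : LatticeIsometric (fun x y => B x y) (prodForm (stdDot 16) (stdDot 9))
      (rootSublattice B E) ((latA 15).prod (latD 9))) :
    ∃ τ : V → (Fin 16 ⊕ Fin 9) → ℤ,
      (∀ r s, r ∈ E → s ∈ E → B r r = 2 → B s s = 2 → ((τ r ⬝ᵥ τ s : ℤ) : ℚ) = B r s) ∧
      ∀ r, r ∈ E → B r r = 2 → ∑ k : Fin 16, τ r (Sum.inl k) = 0 := by
  obtain ⟨f, hf⟩ := hr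
  have ht : ∀ r : V, ∃ t : (Fin 16 ⊕ Fin 9) → ℤ, ∀ h : r ∈ rootSublattice B E,
      (∀ k : Fin 16, (f ⟨r, h⟩).1.1 k = t (Sum.inl k)) ∧ (∀ k : Fin 9, (f ⟨r, h⟩).1.2 k = t (Sum.inr k)) := by
    intro r
    by_cases h : r ∈ rootSublattice B E
    · obtain ⟨h1, h2⟩ := (f ⟨r, h⟩).2
      choose t1 ht1 using h1.1
      choose t2 ht2 using h2.1
      exact ⟨Sum.elim t1 t2, fun _ => ⟨ht1, ht2⟩⟩
    · exact ⟨0, fun h' => absurd h' h⟩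
  choose τ hτ using ht
  have hmem : ∀ r, r ∈ E → B r r = 2 → r ∈ rootSublattice B E := fun r h h' =>
    Submodule.subset_span ⟨h, h'⟩
  refine ⟨τ, ?_, ?_⟩
  · intro r s hr hs hr2 hs2
    have h1 := hτ r (hmem r hr hr2)
    have h2 := hτ s (hmem s hs hs2)
    refine Eq.trans ?_ (hf ⟨r, hmem r hr hr2⟩ ⟨s, hmem s hs hs2⟩)
    simp only [prodForm, stdDot, h1.1, h1.2, h2.1, h2.2, dotProduct, Fintype.sum_sum_type]
    push_cast
    rfl
  · intro r hr hr2
    have h1 := hτ r (hmem r hr hr2)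
    have h0 : ∑ k, (f ⟨r, hmem r hr hr2⟩).1.1 k = 0 := (f ⟨r, hmem r hr hr2⟩).2.1.2
    have : ∑ k, ((τ r (Sum.inl k) : ℤ) : ℚ) = 0 := by
      rw [← h0]
      exact Finset.sum_congr rfl fun k _ => (h1.1 k).symm
    exact_mod_cast this

theorem intOrHalf_of {n : ℕ} (i₀ : Fin n) (x : Fin n → ℚ) (h : ∀ i, ∃ m : ℤ, x i + x i = m)
    (h' : ∀ i, ∃ m : ℤ, x i - x i₀ = m) : IntOrHalf x := by
  obtain ⟨n, hn⟩ := h i₀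
  choose m hm using h'
  rcases Int.even_or_odd' n with ⟨l, rfl | rfl⟩
  · left
    intro i
    refine ⟨m i + l, ?_⟩
    have := hm i
    push_cast at hn ⊢; linarith
  · right
    intro i
    refine ⟨m i + l, ?_⟩
    have := hm i
    push_cast at hn ⊢; linarith

/-- An odd Niemeier lattice of minimum norm 2 whose two even neighbors have root
sublattices isometric to `D₁₆⊕E₈` and `A₁₅⊕D₉` respectively does not contain `L⁺`. -/
theorem stmt4 {V : Type*} [AddCommGroup V] [Module ℚ V]
    (B : V →ₗ[ℚ] V →ₗ[ℚ] ℚ) (hB : IsPosDefSymm B)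
    (N : Submodule ℤ V) (hN : IsOddNiemeier B N)
    (hmin : HasMinNorm B N 2)
    (E₁ E₂ : Submodule ℤ V) (hne : E₁ ≠ E₂)
    (hE₁ : IsEvenNeighbor B N E₁) (hE₂ : IsEvenNeighbor B N E₂)
    (hr₁ : LatticeIsometric (fun x y => B x y) (prodForm (stdDot 16) (stdDot 8))
      (rootSublattice B E₁) ((latD 16).prod latE8))
    (hr₂ : LatticeIsometric (fun x y => B x y) (prodForm (stdDot 16) (stdDot 9))
      (rootSublattice B E₂) ((latA 15).prod (latD 9))) :
    ¬ ContainsLPlus B N := by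
  rintro ⟨h, hh, a, haN, hh2, hha, ha3, haa⟩
  obtain ⟨P, Q, g, hpars, hg⟩ := coords hB hN.2.2.2 hr₁
  obtain ⟨τ, hτ, hτ0⟩ := tau hr₂
  have hpair : ∀ x ∈ E₁, ∀ u ∈ latD 16, ∀ v ∈ latE8, ∃ m : ℤ, u ⬝ᵥ P x + v ⬝ᵥ Q x = m := by
    intro x hx u hu v hv
    obtain ⟨h1, h2, h3⟩ := hg u hu v hv
    obtain ⟨m, hm⟩ := hE₁.1.integral h1 x hx
    rw [hpars, h2, h3] at hm
    exact ⟨m, hm⟩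
  have hP : ∀ x ∈ E₁, IntOrHalf (P x) := by
    intro x hx
    have key : ∀ i j (t : ℤ), Even (1 + t) → ∃ m : ℤ, P x i + t * P x j = m := by
      intro i j t ht
      obtain ⟨m, hm⟩ := hpair x hx (sr i 1 j t) (sr_mem _ _ _ _ ht) 0 (Submodule.zero_mem _)
      rw [zero_dotProduct, add_zero, sr_dot] at hm
      exact ⟨m, by simpa using hm⟩
    refine intOrHalf_of 0 _ (fun i => ?_) (fun i => ?_)
    · obtain ⟨m, hm⟩ := key i i 1 (by decide)
      exact ⟨m, by simpa using hm⟩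
    · obtain ⟨m, hm⟩ := key i 0 (-1) (by decide)
      exact ⟨m, by rw [← hm]; push_cast; ring⟩
  have hQ : ∀ x ∈ E₁, E8x (Q x) := by
    intro x hx
    have key : ∀ i j (t : ℤ), Even (1 + t) → ∃ m : ℤ, Q x i + t * Q x j = m := by
      intro i j t ht
      obtain ⟨m, hm⟩ := hpair x hx 0 (Submodule.zero_mem _) (sr i 1 j t) (sr_mem8 _ _ _ _ ht)
      rw [zero_dotProduct, zero_add, sr_dot] at hm
      exact ⟨m, by simpa using hm⟩
    refine ⟨intOrHalf_of 0 _ (fun i => ?_) (fun i => ?_), ?_⟩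
    · obtain ⟨m, hm⟩ := key i i 1 (by decide)
      exact ⟨m, by simpa using hm⟩
    · obtain ⟨m, hm⟩ := key i 0 (-1) (by decide)
      exact ⟨m, by rw [← hm]; push_cast; ring⟩
    · obtain ⟨m, hm⟩ := hpair x hx 0 (Submodule.zero_mem _) (fun _ => 1 / 2)
        (mem_latE8_half (fun _ => ⟨0, by norm_num⟩) ⟨2, by norm_num⟩)
      rw [zero_dotProduct, zero_add] at hm
      simp only [dotProduct, ← Finset.mul_sum] at hm
      exact ⟨m, by linarith⟩
  -- memberships in `E₁`
  have h2a : ∀ i, (2 : ℚ) • a i ∈ E₁ := by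
    intro i
    have e : (2 : ℚ) • a i = a i + a i := two_smul _ _
    rw [e]
    refine even_mem hB hN hE₁ (N.add_mem (haN i) (haN i)) (n := 6) ?_
    rw [map_add, map_add, LinearMap.add_apply, ha3]; norm_num
  have hsubE : ∀ i j, a i - a j ∈ E₁ := by
    intro i j
    by_cases hij : i = j
    · rw [hij, sub_self]; exact Submodule.zero_mem _
    · refine even_mem hB hN hE₁ (N.sub_mem (haN i) (haN j)) (n := 3) ?_
      rw [map_sub, map_sub, LinearMap.sub_apply, LinearMap.sub_apply, ha3, ha3, haa i j hij,
        haa j i (Ne.symm hij)]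
      norm_num
  have haddE : ∀ i j, a i + a j ∈ E₁ := by
    intro i j
    by_cases hij : i = j
    · rw [hij, ← two_smul ℚ]; exact h2a j
    · refine even_mem hB hN hE₁ (N.add_mem (haN i) (haN j)) (n := 3) ?_
      rw [map_add, map_add, LinearMap.add_apply, LinearMap.add_apply, ha3, ha3, haa i j hij,
        haa j i (Ne.symm hij)]
      norm_num
  have hhE : h ∈ E₁ := even_mem hB hN hE₁ hh (n := 1) (by rw [hh2]; norm_num)
  -- the types of the `a i`
  have hA : ∀ i, Quarter (P (a i)) ∧ ((P (a i) ⬝ᵥ P (a i) = 1 ∧ Q (a i) ⬝ᵥ Q (a i) = 2) ∨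
      (P (a i) ⬝ᵥ P (a i) = 2 ∧ Q (a i) ⬝ᵥ Q (a i) = 1)) := by
    intro i
    have hgood : ∀ u v, Good (P (a i)) (Q (a i)) u v → g u v ∈ E₂ ∧ B (g u v) (g u v) = 2 := by
      rintro u v ⟨hu, hv, hn, m, hm⟩
      obtain ⟨h1, h2, h3⟩ := hg u hu v hv
      have hnorm : B (g u v) (g u v) = 2 := by rw [hpars, h2, h3, hn]
      have hNm : g u v ∈ N := mem_of_pair hB hN hE₁ (haN i) (ha3 i) h1 (m := m) (by
        rw [hpars, h2, h3, hm])
      exact ⟨even_mem hB hN hE₂ hNm (n := 1) (by rw [hnorm]; norm_num), hnorm⟩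
    refine coreA (fun u v => τ (g u v)) ?_ ?_ ?_ ?_ ?_
    · intro u v u' v' hG hG'
      obtain ⟨h1, h2⟩ := hgood u v hG
      obtain ⟨h1', h2'⟩ := hgood u' v' hG'
      obtain ⟨-, e1, e2⟩ := hg u hG.1 v hG.2.1
      obtain ⟨-, e1', e2'⟩ := hg u' hG'.1 v' hG'.2.1
      rw [hτ _ _ h1 h1' h2 h2', hpars, e1, e2, e1', e2']
    · intro u v hG
      obtain ⟨h1, h2⟩ := hgood u v hG
      exact hτ0 _ h1 h2
    · rw [← map_smul]; exact hP _ (h2a i)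
    · rw [← map_smul]; exact hQ _ (h2a i)
    · rw [← hpars, ha3]
  refine coreB (fun i => P (a i)) (fun i => Q (a i)) (P h) (Q h) (fun i => (hA i).1) (fun i => (hA i).2)
    ?_ ?_ ?_ ?_ ?_ ?_
  · intro i j
    simp only [← map_sub]; exact hP _ (hsubE i j)
  · intro i j
    simp only [← map_add]; exact hP _ (haddE i j)
  · intro i j
    simp only [← map_sub]; exact E8x_even (hQ _ (hsubE i j))
  · intro i j hij
    simp only [← hpars]; exact haa i j hij
  · intro i
    simp only [← hpars]; exact hha i
  · obtain ⟨m, hm⟩ := E8x_even (hQ h hhE)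
    have hsum : P h ⬝ᵥ P h + Q h ⬝ᵥ Q h = 2 := by rw [← hpars, hh2]
    have p0 := dot_nonneg (P h)
    have q0 := dot_nonneg (Q h)
    have m0 : 0 ≤ m := by
      have : (0 : ℚ) ≤ m := by linarith
      exact_mod_cast this
    have m1 : m ≤ 1 := by
      have : (m : ℚ) ≤ 1 := by linarith
      exact_mod_cast this
    have : m = 0 ∨ m = 1 := by omega
    rcases this with rfl | rfl
    · left
      push_cast at hm
      refine ⟨?_, eq_zero_of_dot (by linarith)⟩
      rcases hP h hhE with hi | hi
      · choose c hc using hi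
        have hcc : c ⬝ᵥ c = 2 := by
          have : ∑ i, (c i : ℚ) * c i = 2 := by
            have e : P h ⬝ᵥ P h = 2 := by linarith
            rw [← e]
            exact Finset.sum_congr rfl fun i _ => by rw [hc i]
          have h' : ∑ i, c i * c i = 2 := by exact_mod_cast this
          exact h'
        obtain ⟨s, t, hst, hs, ht, hk⟩ := int_root_struct c hcc
        refine ⟨s, t, hst, ?_, ?_, fun k h1 h2 => ?_⟩
        · rw [hc s]; exact_mod_cast hs
        · rw [hc t]; exact_mod_cast ht
        · rw [hc k, hk k h1 h2]; norm_num
      · have := half_norm hi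
        linarith
    · right
      push_cast at hm
      exact ⟨eq_zero_of_dot (by linarith), by linarith⟩

end Niemeier
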